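/- arXiv:2508.21551 — 3 statements merged into one kernel-verified Lean document; each statement's English description precedes it below -/
import Mathlib

section
/- If G is a connected finite simple graph of order n that is isomorphic to neither K_2 nor the 5-cycle C_5, then the isolation number of G satisfies ι(G) ≤ n/3. -/
open Classical

/-- The closed neighborhood `N[D]` of a set `D` of vertices. -/
def closedNbhd {V : Type*} (G : SimpleGraph V) (D : Set V) : Set V :=
  {v | v ∈ D ∨ ∃ u ∈ D, G.Adj u v}

/-- `S` is an isolating set of `G`: deleting `N[S]` leaves no edge. -/
def IsIsolatingSet {V : Type*} (G : SimpleGraph V) (S : Set V) : Prop :=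
  ∀ u v : V, G.Adj u v → u ∈ closedNbhd G S ∨ v ∈ closedNbhd G S

/-- The isolation number: the minimum cardinality of an isolating set. -/
noncomputable def isolationNumber {V : Type*} [Fintype V] (G : SimpleGraph V) : ℕ :=
  sInf {k | ∃ S : Set V, IsIsolatingSet G S ∧ S.ncard = k}

/-!
Among all rooted spanning trees of `G`, take one with the largest total depth and color every
vertex by its depth modulo 3. Two leaves are never adjacent, as one could be hung below the other.
A vertex that is neither the root nor a leaf sees all three colors in its closed neighborhood
(parent, itself, child). So each color class is an isolating set, and the smallest of the three
has at most `n / 3` vertices, unless the root is adjacent to a leaf `v` whose depth is congruent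
to 1 modulo 3. Rerooting the tree at such a leaf changes the total depth by `n - 1 - depth v`, so
maximality forces `depth v = n - 1`: the tree is a Hamiltonian path, closed into a Hamiltonian
cycle by the edge from `v` to the root, and `n = 3k + 2`.

Along that cycle, `k` vertices suffice unless `n = 2` or `G` is a chordless 5-cycle. For `k ≥ 2`,
either some `X a` and `X (a + 4)` are not adjacent and may both be left uncovered, or all these
chords are present and help to cover.
-/

section IsolatingSets

variable {V : Type*} {G : SimpleGraph V}

theorem closedNbhd_mono {S T : Set V} (hST : S ⊆ T) : closedNbhd G S ⊆ closedNbhd G T := by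
  rintro v (hv | ⟨u, hu, huv⟩)
  · exact Or.inl (hST hv)
  · exact Or.inr ⟨u, hST hu, huv⟩

theorem isIsolatingSet_of_forall_ne_mem_closedNbhd {S : Set V} {a b : V} (hab : ¬ G.Adj a b)
    (hS : ∀ v, v ≠ a → v ≠ b → v ∈ closedNbhd G S) : IsIsolatingSet G S := by
  intro u v huv
  by_contra! h
  have hu : u = a ∨ u = b := by
    by_contra! hne
    exact h.1 (hS u hne.1 hne.2)
  have hv : v = a ∨ v = b := by
    by_contra! hne
    exact h.2 (hS v hne.1 hne.2)
  rcases hu with rfl | rfl <;> rcases hv with rfl | rfl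
  exacts [G.irrefl huv, hab huv, hab huv.symm, G.irrefl huv]

theorem isolationNumber_le_card [Fintype V] {S : Finset V} (hS : IsIsolatingSet G (S : Set V)) :
    isolationNumber G ≤ S.card :=
  Nat.sInf_le ⟨S, hS, Set.ncard_coe_finset S⟩

theorem card_mul_isolationNumber_le [Fintype V] {κ : Type*} {s : Finset κ} {f : V → κ}
    (hf : ∀ c ∈ s, IsIsolatingSet G (f ⁻¹' {c})) :
    s.card * isolationNumber G ≤ Fintype.card V := by
  by_contra! hlt
  obtain ⟨c, hc, hlt⟩ := Finset.exists_card_fiber_lt_of_card_lt_mul (f := f) hlt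
  refine hlt.not_ge (isolationNumber_le_card ?_)
  simpa [Set.preimage] using hf c hc

theorem exists_finset_card_le_dominating_path {y : ℕ → V} {t : ℕ}
    (hy : ∀ i, i + 1 < 3 * t → G.Adj (y i) (y (i + 1))) :
    ∃ S : Finset V, S.card ≤ t ∧ ∀ i < 3 * t, y i ∈ closedNbhd G (S : Set V) := by
  refine ⟨(Finset.range t).image fun j ↦ y (3 * j + 1),
    Finset.card_image_le.trans (Finset.card_range t).le, fun i hi ↦ ?_⟩
  have hmem : y (3 * (i / 3) + 1) ∈
      (((Finset.range t).image fun j ↦ y (3 * j + 1) : Finset V) : Set V) :=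
    Finset.mem_image_of_mem _ (Finset.mem_range.2 (by omega))
  obtain h | h | h : i + 1 = 3 * (i / 3) + 1 ∨ i = 3 * (i / 3) + 1 ∨ i = 3 * (i / 3) + 1 + 1 := by
    omega
  · exact Or.inr ⟨_, hmem, h ▸ (hy i (by omega)).symm⟩
  · exact Or.inl (h.symm ▸ hmem)
  · have hadj := hy (3 * (i / 3) + 1) (by omega)
    rw [← h] at hadj
    exact Or.inr ⟨_, hmem, hadj⟩

end IsolatingSets

/-- A spanning closed walk of length `n`, encoded by the cyclic sequence of its vertices. If
`n` is the order of the graph, it is a Hamiltonian cycle (degenerating to a single edge for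
`n = 2`). Since `ZMod 0` is `ℤ`, the case `n = 0` is that of a two-sided infinite walk. -/
structure IsSpanningClosedWalk {V : Type*} (G : SimpleGraph V) {n : ℕ} (X : ZMod n → V) :
    Prop where
  adj_succ (i : ZMod n) : G.Adj (X i) (X (i + 1))
  surjective : Function.Surjective X

namespace IsSpanningClosedWalk

variable {V : Type*} {G : SimpleGraph V} {n t : ℕ}

theorem shift {X : ZMod n → V} (hX : IsSpanningClosedWalk G X) (a : ZMod n) :
    IsSpanningClosedWalk G fun i ↦ X (i + a) where
  adj_succ i := by simpa only [add_right_comm] using hX.adj_succ (i + a)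
  surjective := hX.surjective.comp (Equiv.addRight a).surjective

theorem adj_of_eq_add_one {X : ZMod n → V} (hX : IsSpanningClosedWalk G X) {i j : ZMod n}
    (h : j = i + 1) : G.Adj (X i) (X j) :=
  h ▸ hX.adj_succ i

theorem exists_lt_eq [NeZero n] {X : ZMod n → V} (hX : IsSpanningClosedWalk G X) (v : V) :
    ∃ i < n, X (i : ℕ) = v := by
  obtain ⟨i, rfl⟩ := hX.surjective v
  exact ⟨i.val, i.val_lt, by rw [ZMod.natCast_zmod_val]⟩

theorem exists_finset_card_le_dominating_segment {X : ZMod n → V}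
    (hX : IsSpanningClosedWalk G X) (a t : ℕ) :
    ∃ S : Finset V, S.card ≤ t ∧
      ∀ i, a ≤ i → i < a + 3 * t → X (i : ℕ) ∈ closedNbhd G (S : Set V) := by
  obtain ⟨S, hcard, hS⟩ := exists_finset_card_le_dominating_path
    (y := fun i ↦ X ((a + i : ℕ) : ZMod n)) (t := t)
    fun i _ ↦ hX.adj_of_eq_add_one (by push_cast; ring)
  refine ⟨S, hcard, fun i hai hi ↦ ?_⟩
  simpa only [Nat.add_sub_cancel' hai] using hS (i - a) (by omega)

-- The closed neighborhoods of `X 2, X 6, X 9, …` miss at most `X 0` and `X 4`.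
theorem isolationNumber_le_of_not_adj_four [Fintype V] {X : ZMod (3 * t + 5) → V}
    (hX : IsSpanningClosedWalk G X) (h04 : ¬ G.Adj (X 0) (X 4)) :
    isolationNumber G ≤ t + 1 := by
  obtain ⟨S, hcard, hS⟩ := hX.exists_finset_card_le_dominating_segment 5 t
  refine (isolationNumber_le_card (S := insert (X 2) S) ?_).trans
    ((Finset.card_insert_le _ _).trans (by omega))
  refine isIsolatingSet_of_forall_ne_mem_closedNbhd h04 fun v hv0 hv4 ↦ ?_
  obtain ⟨i, hi, rfl⟩ := hX.exists_lt_eq v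
  have hX2 : X 2 ∈ ((insert (X 2) S : Finset V) : Set V) := by simp
  by_cases h5 : 5 ≤ i
  · exact closedNbhd_mono (Finset.coe_subset.2 (Finset.subset_insert _ _)) (hS i h5 (by omega))
  interval_cases i
  · exact absurd (by simp) hv0
  · exact Or.inr ⟨_, hX2, (hX.adj_of_eq_add_one (by norm_num)).symm⟩
  · exact Or.inl (by simp)
  · exact Or.inr ⟨_, hX2, hX.adj_of_eq_add_one (by norm_num)⟩
  · exact absurd (by simp) hv4

-- The closed neighborhoods of `X 0, X 2, X 6, X 9, …` miss at most `X (-3)`.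
theorem isolationNumber_le_of_adj_four [Fintype V] {X : ZMod (3 * t + 8) → V}
    (hX : IsSpanningClosedWalk G X) (h04 : G.Adj (X 0) (X 4)) (h2 : G.Adj (X (-2)) (X 2)) :
    isolationNumber G ≤ t + 2 := by
  obtain ⟨S, hcard, hS⟩ := hX.exists_finset_card_le_dominating_segment 5 t
  refine (isolationNumber_le_card (S := insert (X 0) (insert (X 2) S)) ?_).trans
    ((Finset.card_insert_le _ _).trans (Nat.succ_le_succ
      ((Finset.card_insert_le _ _).trans (by omega))))
  refine isIsolatingSet_of_forall_ne_mem_closedNbhd (G.irrefl (v := X (-3))) fun v hv _ ↦ ?_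
  obtain ⟨i, hi, rfl⟩ := hX.exists_lt_eq v
  have hX0 : X 0 ∈ ((insert (X 0) (insert (X 2) S) : Finset V) : Set V) := by simp
  have hX2 : X 2 ∈ ((insert (X 0) (insert (X 2) S) : Finset V) : Set V) := by simp
  have hwrap : (3 * t + 8 : ZMod (3 * t + 8)) = 0 := mod_cast ZMod.natCast_self (3 * t + 8)
  by_cases h5 : 5 ≤ i
  · by_cases hlt : i < 5 + 3 * t
    · exact closedNbhd_mono (Finset.coe_subset.2
        ((Finset.subset_insert _ _).trans (Finset.subset_insert _ _))) (hS i h5 hlt)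
    obtain rfl | rfl | rfl : i = 3 * t + 5 ∨ i = 3 * t + 6 ∨ i = 3 * t + 7 := by omega
    · exact absurd (congrArg X (by push_cast; linear_combination hwrap)) hv
    · refine Or.inr ⟨_, hX2, ?_⟩
      convert h2.symm using 2
      push_cast
      linear_combination hwrap
    · exact Or.inr ⟨_, hX0,
        (hX.adj_of_eq_add_one (by push_cast; linear_combination -hwrap)).symm⟩
  interval_cases i
  · exact Or.inl (by simp)
  · exact Or.inr ⟨_, hX0, hX.adj_of_eq_add_one (by norm_num)⟩
  · exact Or.inl (by simp)
  · exact Or.inr ⟨_, hX2, hX.adj_of_eq_add_one (by norm_num)⟩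
  · exact Or.inr ⟨_, hX0, by simpa using h04⟩

theorem isolationNumber_le_of_two_le [Fintype V] {k : ℕ} {X : ZMod (3 * k + 2) → V}
    (hX : IsSpanningClosedWalk G X) (hk : 2 ≤ k) : isolationNumber G ≤ k := by
  obtain ⟨t, rfl⟩ := Nat.exists_eq_add_of_le' hk
  by_cases hchord : ∀ a, G.Adj (X a) (X (a + 4))
  · refine isolationNumber_le_of_adj_four hX ?_ ?_
    · simpa using hchord 0
    · convert hchord (-2) using 2
      ring
  · push Not at hchord
    obtain ⟨a, ha⟩ := hchord
    refine isolationNumber_le_of_not_adj_four (t := t + 1) (hX.shift a) ?_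
    simpa [add_comm] using ha

theorem bijective_of_card_eq [Fintype V] [NeZero n] {X : ZMod n → V}
    (hX : IsSpanningClosedWalk G X) (hcard : Fintype.card V = n) : Function.Bijective X :=
  (Fintype.bijective_iff_surjective_and_card X).2 ⟨hX.surjective, by rw [ZMod.card, hcard]⟩

theorem nonempty_iso_top_of_card_eq_two [Fintype V] {X : ZMod 2 → V}
    (hX : IsSpanningClosedWalk G X) (hcard : Fintype.card V = 2) :
    Nonempty (G ≃g (⊤ : SimpleGraph (Fin 2))) := by
  let e : Fin 2 ≃ V := Equiv.ofBijective X (hX.bijective_of_card_eq hcard)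
  refine ⟨(RelIso.mk e fun {i j} ↦ ?_ : (⊤ : SimpleGraph (Fin 2)) ≃g G).symm⟩
  have hdiff : ∀ i j : ZMod 2, i = j ∨ j = i + 1 := by decide
  rcases hdiff i j with rfl | rfl
  · exact iff_of_false G.irrefl (SimpleGraph.irrefl _)
  · exact iff_of_true (hX.adj_succ i) (by decide +revert)

theorem nonempty_iso_cycleGraph_five_of_card_eq_five [Fintype V] {X : ZMod 5 → V}
    (hX : IsSpanningClosedWalk G X) (hcard : Fintype.card V = 5)
    (hchord : ∀ a, ¬ G.Adj (X a) (X (a + 2))) :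
    Nonempty (G ≃g SimpleGraph.cycleGraph 5) := by
  let e : Fin 5 ≃ V := Equiv.ofBijective X (hX.bijective_of_card_eq hcard)
  refine ⟨(RelIso.mk e fun {i j} ↦ ?_ : SimpleGraph.cycleGraph 5 ≃g G).symm⟩
  have hdiff : ∀ i j : ZMod 5, i = j ∨ j = i + 1 ∨ i = j + 1 ∨ j = i + 2 ∨ i = j + 2 := by
    decide
  rcases hdiff i j with rfl | rfl | rfl | rfl | rfl
  · exact iff_of_false G.irrefl (SimpleGraph.irrefl _)
  · exact iff_of_true (hX.adj_succ i) (by decide +revert)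
  · exact iff_of_true (hX.adj_succ j).symm (by decide +revert)
  · exact iff_of_false (hchord i) (by decide +revert)
  · exact iff_of_false (fun h ↦ hchord j h.symm) (by decide +revert)

theorem isolationNumber_le_one_of_adj_two [Fintype V] {X : ZMod 5 → V}
    (hX : IsSpanningClosedWalk G X) (h02 : G.Adj (X 0) (X 2)) : isolationNumber G ≤ 1 := by
  refine isolationNumber_le_card (S := {X 0}) ?_
  refine isIsolatingSet_of_forall_ne_mem_closedNbhd (G.irrefl (v := X 3)) fun v hv _ ↦ ?_
  obtain ⟨i, hi, rfl⟩ := hX.exists_lt_eq v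
  have hX0 : X 0 ∈ (({X 0} : Finset V) : Set V) := by simp
  interval_cases i
  · exact Or.inl hX0
  · exact Or.inr ⟨_, hX0, hX.adj_of_eq_add_one rfl⟩
  · exact Or.inr ⟨_, hX0, h02⟩
  · exact absurd rfl hv
  · exact Or.inr ⟨_, hX0, (hX.adj_of_eq_add_one (i := 4) rfl).symm⟩

theorem isolationNumber_le_one_of_not_iso_cycleGraph_five [Fintype V] {X : ZMod 5 → V}
    (hX : IsSpanningClosedWalk G X) (hcard : Fintype.card V = 5)
    (hC5 : ¬ Nonempty (G ≃g SimpleGraph.cycleGraph 5)) : isolationNumber G ≤ 1 := by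
  obtain ⟨a, ha⟩ : ∃ a, G.Adj (X a) (X (a + 2)) := by
    by_contra! hchord
    exact hC5 (hX.nonempty_iso_cycleGraph_five_of_card_eq_five hcard hchord)
  refine isolationNumber_le_one_of_adj_two (hX.shift a) ?_
  simpa [add_comm] using ha

end IsSpanningClosedWalk

/-- `d` is the depth function of some spanning tree of `G` rooted at `r`. Only the depths are
recorded: each vertex other than the root has a neighbor that can serve as its parent. -/
structure IsDepthFunction {V : Type*} (G : SimpleGraph V) (r : V) (d : V → ℕ) : Prop where
  root : d r = 0
  exists_parent : ∀ v, v ≠ r → ∃ w, G.Adj v w ∧ d v = d w + 1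

/-- `v` has no neighbor one level deeper, so that it is a leaf of every rooted spanning tree
with depth function `d`. -/
def IsDepthLeaf {V : Type*} (G : SimpleGraph V) (d : V → ℕ) (v : V) : Prop :=
  ∀ w, G.Adj v w → d w ≠ d v + 1

theorem not_isDepthLeaf_iff {V : Type*} {G : SimpleGraph V} {d : V → ℕ} {v : V} :
    ¬ IsDepthLeaf G d v ↔ ∃ w, G.Adj v w ∧ d w = d v + 1 := by
  simp [IsDepthLeaf]

theorem isDepthFunction_dist {V : Type*} {G : SimpleGraph V} (hG : G.Connected) (r : V) :
    IsDepthFunction G r fun v ↦ G.dist v r where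
  root := SimpleGraph.dist_self
  exists_parent v hv := by
    obtain ⟨p, hp⟩ := hG.exists_walk_length_eq_dist v r
    cases p with
    | nil => exact absurd rfl hv
    | @cons _ w _ hvw p =>
      rw [SimpleGraph.Walk.length_cons] at hp
      have hle : G.dist w r ≤ p.length := SimpleGraph.dist_le p
      have htri : G.dist v r ≤ G.dist v w + G.dist w r := hG.dist_triangle
      rw [SimpleGraph.dist_eq_one_iff_adj.2 hvw] at htri
      exact ⟨w, hvw, by omega⟩

namespace IsDepthFunction

variable {V : Type*} {G : SimpleGraph V} {r u v : V} {d : V → ℕ}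

theorem eq_root_of_eq_zero (hd : IsDepthFunction G r d) (hv : d v = 0) : v = r := by
  by_contra hne
  obtain ⟨w, -, hw⟩ := hd.exists_parent v hne
  omega

theorem exists_eq_of_le (hd : IsDepthFunction G r d) {j : ℕ} (hj : j ≤ d v) : ∃ w, d w = j := by
  induction h : d v generalizing v with
  | zero => exact ⟨v, by omega⟩
  | succ k ih =>
    rcases hj.eq_or_lt with rfl | hlt
    · exact ⟨v, rfl⟩
    · obtain ⟨w, -, hw⟩ := hd.exists_parent v (fun hvr ↦ by rw [hvr, hd.root] at h; omega)
      exact ih (v := w) (by omega) (by omega)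

theorem lt_card [Fintype V] (hd : IsDepthFunction G r d) (v : V) : d v < Fintype.card V := by
  have hsub : Finset.range (d v + 1) ⊆ Finset.univ.image d := fun j hj ↦ by
    obtain ⟨w, hw⟩ := hd.exists_eq_of_le (Nat.lt_succ_iff.1 (Finset.mem_range.1 hj))
    exact Finset.mem_image.2 ⟨w, Finset.mem_univ w, hw⟩
  simpa using (Finset.card_le_card hsub).trans Finset.card_image_le

theorem not_isDepthLeaf_root (hd : IsDepthFunction G r d) (hv : v ≠ r) : ¬ IsDepthLeaf G d r := by
  have hpos : 1 ≤ d v := Nat.one_le_iff_ne_zero.2 fun h ↦ hv (hd.eq_root_of_eq_zero h)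
  obtain ⟨w, hw⟩ := hd.exists_eq_of_le hpos
  obtain ⟨p, hwp, hp⟩ := hd.exists_parent w (fun h ↦ by rw [h, hd.root] at hw; omega)
  obtain rfl : p = r := hd.eq_root_of_eq_zero (by omega)
  exact fun hleaf ↦ hleaf w hwp.symm hp

theorem update_leaf (hd : IsDepthFunction G r d) (hur : u ≠ r) (hu : IsDepthLeaf G d u)
    (huv : G.Adj u v) : IsDepthFunction G r (Function.update d u (d v + 1)) where
  root := by rw [Function.update_of_ne hur.symm, hd.root]
  exists_parent w hw := by
    by_cases hwu : w = u
    · subst hwu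
      exact ⟨v, huv, by rw [Function.update_self, Function.update_of_ne huv.ne']⟩
    · obtain ⟨p, hwp, hp⟩ := hd.exists_parent w hw
      have hpu : p ≠ u := by
        rintro rfl
        exact hu w hwp.symm hp
      exact ⟨p, hwp, by rw [Function.update_of_ne hwu, Function.update_of_ne hpu, hp]⟩

theorem reroot_leaf (hd : IsDepthFunction G r d) (hv : IsDepthLeaf G d v) (hrv : G.Adj r v) :
    IsDepthFunction G v (Function.update (d + 1) v 0) where
  root := Function.update_self ..
  exists_parent w hw := by
    by_cases hwr : w = r
    · subst hwr
      refine ⟨v, hrv, ?_⟩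
      rw [Function.update_of_ne hw, Function.update_self, Pi.add_apply, hd.root, Pi.one_apply]
    · obtain ⟨p, hwp, hp⟩ := hd.exists_parent w hwr
      have hpv : p ≠ v := by
        rintro rfl
        exact hv w hwp.symm hp
      refine ⟨p, hwp, ?_⟩
      rw [Function.update_of_ne hw, Function.update_of_ne hpv, Pi.add_apply, hp, Pi.add_apply,
        Pi.one_apply, Pi.one_apply]

theorem mem_closedNbhd_mod_three (hd : IsDepthFunction G r d) (hvr : v ≠ r)
    (hv : ¬ IsDepthLeaf G d v) {c : ℕ} (hc : c < 3) :
    v ∈ closedNbhd G ((d · % 3) ⁻¹' {c}) := by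
  obtain ⟨p, hvp, hp⟩ := hd.exists_parent v hvr
  obtain ⟨w, hvw, hw⟩ := not_isDepthLeaf_iff.1 hv
  obtain h | h | h : d v % 3 = c ∨ d p % 3 = c ∨ d w % 3 = c := by omega
  exacts [Or.inl h, Or.inr ⟨p, h, hvp.symm⟩, Or.inr ⟨w, h, hvw.symm⟩]

theorem mem_closedNbhd_mod_three_of_root_adj (hd : IsDepthFunction G r d) (hrv : G.Adj r v)
    (hmod : d v % 3 ≠ 1) {c : ℕ} (hc : c < 3) :
    r ∈ closedNbhd G ((d · % 3) ⁻¹' {c}) ∨ v ∈ closedNbhd G ((d · % 3) ⁻¹' {c}) := by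
  obtain ⟨p, hvp, hp⟩ := hd.exists_parent v hrv.ne'
  obtain ⟨w, hrw, hw⟩ := not_isDepthLeaf_iff.1 (hd.not_isDepthLeaf_root hrv.ne')
  have hr := hd.root
  obtain h | h | h | h : d r % 3 = c ∨ d w % 3 = c ∨ d v % 3 = c ∨ d p % 3 = c := by omega
  exacts [Or.inl (Or.inl h), Or.inl (Or.inr ⟨w, h, hrw.symm⟩), Or.inr (Or.inl h),
    Or.inr (Or.inr ⟨p, h, hvp.symm⟩)]

theorem exists_isSpanningClosedWalk [Fintype V] (hd : IsDepthFunction G r d) (hrv : G.Adj r v)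
    (hv : d v + 1 = Fintype.card V) :
    ∃ X : ZMod (Fintype.card V) → V, IsSpanningClosedWalk G X := by
  have : NeZero (Fintype.card V) := ⟨by omega⟩
  have hlevel (i : ZMod (Fintype.card V)) : ∃ w, d w = i.val :=
    hd.exists_eq_of_le (v := v) (by have := i.val_lt; omega)
  choose X hdX using hlevel
  have hXinj : Function.Injective X := fun i j hij ↦
    ZMod.val_injective _ (by rw [← hdX, ← hdX, hij])
  have hXbij : Function.Bijective X :=
    (Fintype.bijective_iff_injective_and_card X).2 ⟨hXinj, ZMod.card _⟩
  have hX_of_depth {w : V} {i : ZMod (Fintype.card V)} (hw : d w = i.val) : w = X i := by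
    obtain ⟨j, rfl⟩ := hXbij.surjective w
    rw [ZMod.val_injective _ ((hdX j).symm.trans hw)]
  refine ⟨X, fun i ↦ ?_, hXbij.surjective⟩
  have hcard : 1 < Fintype.card V := Fintype.one_lt_card_iff.2 ⟨r, v, hrv.ne⟩
  have : Fact (1 < Fintype.card V) := ⟨hcard⟩
  have hval : (i + 1).val = (i.val + 1) % Fintype.card V := by rw [ZMod.val_add, ZMod.val_one]
  rcases (Nat.succ_le_of_lt i.val_lt).eq_or_lt with hlast | hlt
  · have hXi : v = X i := hX_of_depth (by omega)
    have hXsucc : r = X (i + 1) := hX_of_depth (by rw [hval, hd.root, ← Nat.succ_eq_add_one,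
      hlast, Nat.mod_self])
    exact hXi ▸ hXsucc ▸ hrv.symm
  · rw [Nat.mod_eq_of_lt hlt, ← hdX] at hval
    obtain ⟨w, hadj, hw⟩ := hd.exists_parent (X (i + 1))
      (fun h ↦ by rw [h, hd.root] at hval; omega)
    obtain rfl : w = X i := hX_of_depth (by omega)
    exact hadj.symm

end IsDepthFunction

/-- `d` is a depth function with the largest total depth among the depth functions of all rooted
spanning trees of `G`. -/
structure IsDeepestFunction {V : Type*} [Fintype V] (G : SimpleGraph V) (r : V) (d : V → ℕ) :
    Prop extends IsDepthFunction G r d where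
  sum_le : ∀ r' d', IsDepthFunction G r' d' → ∑ v, d' v ≤ ∑ v, d v

theorem exists_isDeepestFunction {V : Type*} [Fintype V] {G : SimpleGraph V} (hG : G.Connected) :
    ∃ r d, IsDeepestFunction G r d := by
  obtain ⟨r₀⟩ := hG.nonempty
  let totals : Set ℕ := {s | ∃ r d, IsDepthFunction G r d ∧ ∑ v, d v = s}
  have hne : totals.Nonempty := ⟨_, r₀, _, isDepthFunction_dist hG r₀, rfl⟩
  have hbdd : BddAbove totals := by
    refine ⟨∑ _ : V, Fintype.card V, ?_⟩
    rintro _ ⟨r, d, hd, rfl⟩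
    exact Finset.sum_le_sum fun v _ ↦ (hd.lt_card v).le
  obtain ⟨r, d, hd, hsum⟩ := Nat.sSup_mem hne hbdd
  exact ⟨r, d, hd, fun r' d' hd' ↦ hsum ▸ le_csSup hbdd ⟨r', d', hd', rfl⟩⟩

namespace IsDeepestFunction

variable {V : Type*} [Fintype V] {G : SimpleGraph V} {r u v : V} {d : V → ℕ}

-- Hanging a leaf below another leaf would increase the total depth.
theorem not_isDepthLeaf_or_of_adj (hd : IsDeepestFunction G r d) (huv : G.Adj u v) :
    ¬ IsDepthLeaf G d u ∨ ¬ IsDepthLeaf G d v := by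
  wlog hle : d u ≤ d v generalizing u v
  · exact (this huv.symm (by omega)).symm
  by_cases hur : u = r
  · exact Or.inl (hur ▸ hd.not_isDepthLeaf_root (hur ▸ huv.ne'))
  refine Or.inl fun hu ↦ ?_
  have hlt : d < Function.update d u (d v + 1) := lt_update_self_iff.2 (by omega)
  exact (Fintype.sum_strictMono hlt).not_ge (hd.sum_le _ _ (hd.update_leaf hur hu huv))

-- Rerooting at `v` raises every other vertex by one and lowers `v` by `d v`.
theorem depth_add_one_eq_card_of_root_adj_leaf (hd : IsDeepestFunction G r d)
    (hrv : G.Adj r v) (hv : IsDepthLeaf G d v) : d v + 1 = Fintype.card V := by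
  have hle := hd.sum_le _ _ (hd.reroot_leaf hv hrv)
  have hsum : ∑ w, Function.update (d + 1) v 0 w + (d v + 1) = ∑ w, d w + Fintype.card V := by
    calc ∑ w, Function.update (d + 1) v 0 w + (d v + 1)
        = ∑ w ∈ Finset.univ \ {v}, (d + 1) w + (d + 1) v := by
          rw [Finset.sum_update_of_mem (Finset.mem_univ v), zero_add, Pi.add_apply, Pi.one_apply]
      _ = ∑ w, (d w + 1) :=
          (Finset.sum_eq_sum_sdiff_singleton_add (Finset.mem_univ v) _).symm
      _ = ∑ w, d w + Fintype.card V := by simp [Finset.sum_add_distrib]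
  have hlt := hd.lt_card v
  omega

theorem isIsolatingSet_mod_three (hd : IsDeepestFunction G r d)
    (hroot : ∀ v, G.Adj r v → IsDepthLeaf G d v → d v % 3 ≠ 1) {c : ℕ} (hc : c < 3) :
    IsIsolatingSet G ((d · % 3) ⁻¹' {c}) := by
  intro u v huv
  wlog hu : ¬ IsDepthLeaf G d u generalizing u v
  · exact (this v u huv.symm ((hd.not_isDepthLeaf_or_of_adj huv).resolve_left hu)).symm
  by_cases hur : u = r
  · subst hur
    by_cases hv : IsDepthLeaf G d v
    · exact hd.mem_closedNbhd_mod_three_of_root_adj huv (hroot v huv hv) hc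
    · exact Or.inr (hd.mem_closedNbhd_mod_three huv.ne' hv hc)
  · exact Or.inl (hd.mem_closedNbhd_mod_three hur hu hc)

end IsDeepestFunction

theorem three_mul_isolationNumber_le_card_or_exists_isSpanningClosedWalk {V : Type*} [Fintype V]
    {G : SimpleGraph V} (hG : G.Connected) :
    3 * isolationNumber G ≤ Fintype.card V ∨
      ∃ k, Fintype.card V = 3 * k + 2 ∧
        ∃ X : ZMod (3 * k + 2) → V, IsSpanningClosedWalk G X := by
  obtain ⟨r, d, hd⟩ := exists_isDeepestFunction hG
  by_cases hroot : ∀ v, G.Adj r v → IsDepthLeaf G d v → d v % 3 ≠ 1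
  · left
    simpa using card_mul_isolationNumber_le (s := Finset.range 3) fun c hc ↦
      hd.isIsolatingSet_mod_three hroot (Finset.mem_range.1 hc)
  · right
    push Not at hroot
    obtain ⟨v, hrv, hv, hmod⟩ := hroot
    have hcard := hd.depth_add_one_eq_card_of_root_adj_leaf hrv hv
    have hk : Fintype.card V = 3 * (d v / 3) + 2 := by omega
    exact ⟨d v / 3, hk, hk ▸ hd.exists_isSpanningClosedWalk hrv hcard⟩

/-- If `G` is a connected graph of order `n` other than `K₂` and `C₅`,
then `ι(G) ≤ n/3`. -/
theorem isolation_number_le_third {V : Type*} [Fintype V] (G : SimpleGraph V) (n : ℕ)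
    (hn : Fintype.card V = n) (hconn : G.Connected)
    (hK2 : ¬ Nonempty (G ≃g (⊤ : SimpleGraph (Fin 2))))
    (hC5 : ¬ Nonempty (G ≃g SimpleGraph.cycleGraph 5)) :
    (isolationNumber G : ℝ) ≤ n / 3 := by
  subst hn
  suffices h : 3 * isolationNumber G ≤ Fintype.card V by
    rw [le_div_iff₀' three_pos]
    exact_mod_cast h
  rcases three_mul_isolationNumber_le_card_or_exists_isSpanningClosedWalk hconn with
    h | ⟨k, hcard, X, hX⟩
  · exact h
  match k with
  | 0 => exact absurd (hX.nonempty_iso_top_of_card_eq_two hcard) hK2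
  | 1 =>
    have := hX.isolationNumber_le_one_of_not_iso_cycleGraph_five hcard hC5
    omega
  | t + 2 =>
    have := hX.isolationNumber_le_of_two_le (by omega)
    omega
end

section
/- If G is a graph of order n with minimum degree at least 4, then ι(G) ≤ 13n/41. -/
open Classical

/-!
Build the isolating set step by step, keeping track of the set `W` of vertices whose edges are
still to be isolated. A vertex of `W` has weight `26`, and a vertex outside `W` has a weight
between `0` and `14` that increases with its number of neighbors in `W`. The total weight starts
at `26 n`, so it suffices to discard vertices from `W` in such a way that every vertex added to
the isolating set is paid for by a drop of `82` in the total weight: `26 / 82 = 13 / 41`.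

Since the minimum degree is at least `4`, a discarded vertex with `d < 4` neighbors in `W` has at
least `4 - d` neighbors outside `W`, and these lose weight too. If some vertex has many neighbors
in `W`, then discarding those pays for that vertex. Otherwise `G[W]` has maximum degree at most
`2`. Isolated vertices are discarded for free, and triangles, `4`-cycles, the last three vertices of
a path component, and six consecutive vertices of a path or cycle pay for the one or two vertices
that isolate them. Only components that are single edges or pentagons remain. If no outer vertex
seeing such a component has a neighbor in `W` elsewhere, all these outer vertices lose their whole
weight; otherwise an outer vertex seeing two components isolates part of the first one and a vertex
of the second one simultaneously.
-/

namespace IsolationNumber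

open Finset

variable {V : Type*} {G : SimpleGraph V} {W R S T : Finset V} {u v w x y z : V} {c : ℕ}

lemma mem_closedNbhd_of_mem {D : Set V} (hv : v ∈ D) : v ∈ closedNbhd G D :=
  Or.inl hv

lemma mem_closedNbhd_of_adj {D : Set V} (hu : u ∈ D) (huv : G.Adj u v) : v ∈ closedNbhd G D :=
  Or.inr ⟨u, hu, huv⟩

lemma closedNbhd_mono {D E : Set V} (h : D ⊆ E) : closedNbhd G D ⊆ closedNbhd G E := by
  rintro v (hv | ⟨u, hu, huv⟩)
  · exact mem_closedNbhd_of_mem (h hv)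
  · exact mem_closedNbhd_of_adj (h hu) huv

lemma isolationNumber_le_ncard [Fintype V] {D : Set V} (hD : IsIsolatingSet G D) :
    isolationNumber G ≤ D.ncard :=
  Nat.sInf_le ⟨D, hD, rfl⟩

/-- The neighbors of `v` that lie in `W`; the vertex `v` itself need not be in `W`. -/
noncomputable def nbrsIn (G : SimpleGraph V) (W : Finset V) (v : V) : Finset V :=
  {w ∈ W | G.Adj v w}

/-- The number of neighbors of `v` in `W`. -/
noncomputable def degIn (G : SimpleGraph V) (W : Finset V) (v : V) : ℕ :=
  #(nbrsIn G W v)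

lemma mem_nbrsIn : w ∈ nbrsIn G W v ↔ w ∈ W ∧ G.Adj v w :=
  mem_filter

lemma nbrsIn_subset : nbrsIn G W v ⊆ W :=
  filter_subset _ _

lemma mem_nbrsIn_comm (hv : v ∈ W) (hw : w ∈ nbrsIn G W v) : v ∈ nbrsIn G W w :=
  mem_nbrsIn.2 ⟨hv, (mem_nbrsIn.1 hw).2.symm⟩

lemma ne_of_mem_nbrsIn (hw : w ∈ nbrsIn G W v) : w ≠ v :=
  (mem_nbrsIn.1 hw).2.ne'

lemma nbrsIn_sdiff : nbrsIn G (W \ R) v = nbrsIn G W v \ R := by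
  ext w
  simp only [mem_nbrsIn, mem_sdiff]
  tauto

lemma degIn_le_card : degIn G W v ≤ #W :=
  card_filter_le _ _

lemma degIn_sdiff_add_degIn (hR : R ⊆ W) (v : V) :
    degIn G (W \ R) v + degIn G R v = degIn G W v := by
  have hinter : nbrsIn G R v = nbrsIn G W v ∩ R := by
    ext w
    simp only [mem_nbrsIn, mem_inter]
    have := @hR w
    tauto
  rw [degIn, degIn, nbrsIn_sdiff, hinter, card_sdiff_add_card_inter, degIn]

lemma degIn_sdiff_le : degIn G (W \ R) v ≤ degIn G W v :=
  card_le_card (nbrsIn_sdiff.trans_subset sdiff_subset)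

lemma degIn_sdiff_lt (hx : x ∈ nbrsIn G W v) (hxR : x ∈ R) :
    degIn G (W \ R) v < degIn G W v := by
  refine card_lt_card ⟨nbrsIn_sdiff.trans_subset sdiff_subset, fun hsub ↦ ?_⟩
  exact (mem_sdiff.1 (nbrsIn_sdiff.subset (hsub hx))).2 hxR

lemma degIn_sdiff_eq_zero (h : nbrsIn G W v ⊆ R) : degIn G (W \ R) v = 0 := by
  rw [degIn, nbrsIn_sdiff, sdiff_eq_empty_iff_subset.2 h, card_empty]

lemma sum_degIn_comm (G : SimpleGraph V) (A B : Finset V) :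
    ∑ a ∈ A, degIn G B a = ∑ b ∈ B, degIn G A b := by
  simpa only [bipartiteAbove, bipartiteBelow, G.adj_comm, degIn, nbrsIn] using
    sum_card_bipartiteAbove_eq_sum_card_bipartiteBelow (s := A) (t := B) G.Adj

lemma degIn_add_degIn_compl [Fintype V] (W : Finset V) (v : V) :
    degIn G W v + degIn G Wᶜ v = G.degree v := by
  have huniv : degIn G univ v = G.degree v := by
    rw [degIn, nbrsIn, ← G.card_neighborFinset_eq_degree, G.neighborFinset_eq_filter]
  rw [← huniv, ← degIn_sdiff_add_degIn (subset_univ W) v, ← compl_eq_univ_sdiff, add_comm]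

/-- Every edge of `G[W]` with an end in `R` has an end in `N[T]`. -/
def IsolatesEdges (G : SimpleGraph V) (W R T : Finset V) : Prop :=
  ∀ r ∈ R, ∀ w ∈ nbrsIn G W r, r ∈ closedNbhd G T ∨ w ∈ closedNbhd G T

lemma isolatesEdges_of_subset_closedNbhd (h : ∀ r ∈ R, r ∈ closedNbhd G T) :
    IsolatesEdges G W R T :=
  fun r hr _ _ ↦ Or.inl (h r hr)

lemma IsolatesEdges.isIsolatingSet [Fintype V] (hS : IsolatesEdges G univ univ S) :
    IsIsolatingSet G (S : Set V) :=
  fun u v huv ↦ hS u (mem_univ u) v (mem_nbrsIn.2 ⟨mem_univ v, huv⟩)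

lemma IsolatesEdges.union (hT : IsolatesEdges G W R T)
    (hS : IsolatesEdges G (W \ R) (W \ R) S) : IsolatesEdges G W W (S ∪ T) := by
  have hSU : closedNbhd G (S : Set V) ⊆ closedNbhd G ↑(S ∪ T) :=
    closedNbhd_mono (coe_subset.2 subset_union_left)
  have hTU : closedNbhd G (T : Set V) ⊆ closedNbhd G ↑(S ∪ T) :=
    closedNbhd_mono (coe_subset.2 subset_union_right)
  intro u hu v hv
  by_cases huR : u ∈ R
  · exact (hT u huR v hv).imp (@hTU u) (@hTU v)
  by_cases hvR : v ∈ R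
  · exact (hT v hvR u (mem_nbrsIn_comm hu hv)).symm.imp (@hTU u) (@hTU v)
  have hv' : v ∈ nbrsIn G (W \ R) u := nbrsIn_sdiff.symm.subset (mem_sdiff.2 ⟨hv, hvR⟩)
  exact (hS u (mem_sdiff.2 ⟨hu, huR⟩) v hv').imp (@hSU u) (@hSU v)

/-- The weight of a vertex outside the current set `W`, as a function of its number of neighbors
in `W`. Vertices of `W` weigh `26 = 2 * 13`, and a vertex of the isolating set costs
`82 = 2 * 41`. Given these, the values at `1`, `2` and `3` are the extreme ones for which
`reducible_of_edge`, `degIn_le_two_of_mem` and `degIn_le_three_of_mem` break even. -/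
def outerWeight : ℕ → ℤ
  | 0 => 0
  | 1 => 5
  | 2 => 10
  | 3 => 12
  | _ => 14

lemma outerWeight_of_four_le {i : ℕ} (hi : 4 ≤ i) : outerWeight i = 14 := by
  unfold outerWeight
  split <;> omega

lemma outerWeight_mono : Monotone outerWeight := by
  refine monotone_nat_of_le_succ fun i ↦ ?_
  rcases lt_or_ge i 4 with hi | hi
  · interval_cases i <;> decide
  · rw [outerWeight_of_four_le hi, outerWeight_of_four_le (by omega)]

@[simp]
lemma outerWeight_zero : outerWeight 0 = 0 :=
  rfl

lemma outerWeight_nonneg (i : ℕ) : 0 ≤ outerWeight i :=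
  outerWeight_mono (Nat.zero_le i)

lemma outerWeight_le (i : ℕ) : outerWeight i ≤ 14 := by
  unfold outerWeight
  split <;> norm_num

lemma two_mul_le_outerWeight_add_sub {i j : ℕ} (hij : i + j ≤ 4) :
    2 * (j : ℤ) ≤ outerWeight (i + j) - outerWeight i := by
  have hi : i ≤ 4 := by omega
  have hj : j ≤ 4 := by omega
  interval_cases i <;> interval_cases j <;> simp_all [outerWeight]

/-- The weight of `v` when `W` is the set of vertices whose edges are still to be isolated. -/
noncomputable def weight (G : SimpleGraph V) (W : Finset V) (v : V) : ℤ :=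
  if v ∈ W then 26 else outerWeight (degIn G W v)

lemma weight_of_mem (hv : v ∈ W) : weight G W v = 26 :=
  if_pos hv

lemma weight_of_notMem (hv : v ∉ W) : weight G W v = outerWeight (degIn G W v) :=
  if_neg hv

/-- The total weight, an upper bound for `82` times the number of vertices needed to isolate
the edges of `G[W]`. -/
noncomputable def potential [Fintype V] (G : SimpleGraph V) (W : Finset V) : ℤ :=
  ∑ v, weight G W v

lemma potential_univ [Fintype V] : potential G univ = 26 * Fintype.card V := by
  simp [potential, weight, mul_comm]

lemma potential_nonneg [Fintype V] : 0 ≤ potential G W :=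
  sum_nonneg fun v _ ↦ by
    unfold weight
    split
    · norm_num
    · exact outerWeight_nonneg _

lemma potential_sub_potential_sdiff [Fintype V] (hR : R ⊆ W) :
    potential G W - potential G (W \ R) =
      ∑ r ∈ R, (26 - outerWeight (degIn G (W \ R) r)) +
        ∑ v ∈ Wᶜ, (outerWeight (degIn G W v) - outerWeight (degIn G (W \ R) v)) := by
  have hkept : ∑ v ∈ W \ R, (weight G W v - weight G (W \ R) v) = 0 :=
    sum_eq_zero fun v hv ↦ by
      rw [weight_of_mem hv, weight_of_mem (mem_sdiff.1 hv).1, sub_self]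
  rw [potential, potential, ← sum_sub_distrib, ← sum_add_sum_compl W, ← sum_sdiff hR, hkept,
    zero_add]
  congr 1
  · refine sum_congr rfl fun r hr ↦ ?_
    rw [weight_of_mem (hR hr), weight_of_notMem fun h ↦ (mem_sdiff.1 h).2 hr]
  · refine sum_congr rfl fun v hv ↦ ?_
    have hv' : v ∉ W := mem_compl.1 hv
    rw [weight_of_notMem hv', weight_of_notMem fun h ↦ hv' (mem_sdiff.1 h).1]

/-- A lower bound for what removing `r ∈ R` from `W` contributes to the drop of the potential
when `G` has minimum degree at least `4` and every vertex outside `W` loses weight at least `c`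
per neighbor in `R`: the drop of the weight of `r` itself, and `c` for each of the at least
`4 - degIn G W r` neighbors of `r` outside `W`. -/
noncomputable def gain (G : SimpleGraph V) (W R : Finset V) (c : ℕ) (r : V) : ℤ :=
  26 - outerWeight (degIn G (W \ R) r) + c * (4 - degIn G W r)

lemma le_gain {i j : ℕ} {k : ℤ} {r : V} (hi : degIn G (W \ R) r ≤ i) (hj : degIn G W r ≤ j)
    (hk : k + outerWeight i + c * j ≤ 26 + 4 * c) : k ≤ gain G W R c r := by
  have houter := outerWeight_mono hi
  have hcj : (c : ℤ) * degIn G W r ≤ c * j := by gcongr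
  unfold gain
  linarith

lemma sum_gain_add_sum_surplus_le [Fintype V] (hmin : ∀ v, 4 ≤ G.degree v) (hR : R ⊆ W)
    (c : ℕ) :
    ∑ r ∈ R, gain G W R c r + ∑ v ∈ Wᶜ,
        (outerWeight (degIn G W v) - outerWeight (degIn G (W \ R) v) - c * degIn G R v) ≤
      potential G W - potential G (W \ R) := by
  have hdeg : ∀ r ∈ R, (c : ℤ) * (4 - degIn G W r) ≤ c * degIn G Wᶜ r := fun r _ ↦ by
    have := hmin r
    have := degIn_add_degIn_compl (G := G) W r
    gcongr
    omega
  have hcount : ∑ r ∈ R, (c : ℤ) * degIn G Wᶜ r = ∑ v ∈ Wᶜ, (c : ℤ) * degIn G R v := by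
    rw [← mul_sum, ← mul_sum]
    exact_mod_cast congrArg (c * ·) (sum_degIn_comm G R Wᶜ)
  rw [potential_sub_potential_sdiff hR]
  simp only [gain, sum_add_distrib, sum_sub_distrib]
  linarith [sum_le_sum hdeg]

/-- Every vertex outside `W` loses weight at least `c` for each of its neighbors in `R` when
`W` is replaced by `W \ R`. -/
def LosesAtRate (G : SimpleGraph V) (W R : Finset V) (c : ℕ) : Prop :=
  ∀ v ∉ W, (c : ℤ) * degIn G R v ≤ outerWeight (degIn G W v) - outerWeight (degIn G (W \ R) v)

lemma losesAtRate_zero : LosesAtRate G W R 0 := fun v _ ↦ by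
  simpa using outerWeight_mono degIn_sdiff_le

lemma losesAtRate_two (hout : ∀ v ∉ W, degIn G W v ≤ 4) (hR : R ⊆ W) :
    LosesAtRate G W R 2 := fun v hv ↦ by
  have hsplit := degIn_sdiff_add_degIn (G := G) hR v
  rw [← hsplit]
  exact two_mul_le_outerWeight_add_sub (hsplit.trans_le (hout v hv))

lemma losesAtRate_of_private (hR : R ⊆ W)
    (hprivate : ∀ v ∉ W, (nbrsIn G R v).Nonempty → nbrsIn G W v ⊆ R)
    (hc : ∀ v ∉ W, (c : ℤ) * degIn G R v ≤ outerWeight (degIn G R v)) :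
    LosesAtRate G W R c := fun v hv ↦ by
  have hsplit := degIn_sdiff_add_degIn (G := G) hR v
  rcases (nbrsIn G R v).eq_empty_or_nonempty with hempty | hnonempty
  · have hzero : degIn G R v = 0 := card_eq_zero.2 hempty
    rw [← hsplit, hzero]
    simp
  · rw [← hsplit, degIn_sdiff_eq_zero (hprivate v hv hnonempty), zero_add]
    simpa using hc v hv

/-- Some nonempty `R ⊆ W` can be discarded from `W` at the cost of adding a set `T` to the
isolating set, where the drop of the potential pays `82` for each vertex of `T`. -/
def Reducible [Fintype V] (G : SimpleGraph V) (W : Finset V) : Prop :=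
  ∃ R T : Finset V, R ⊆ W ∧ R.Nonempty ∧ IsolatesEdges G W R T ∧
    potential G (W \ R) + 82 * #T ≤ potential G W

section Reductions

variable [Fintype V]

lemma reducible_of_sum_gain (hmin : ∀ v, 4 ≤ G.degree v) (hR : R ⊆ W) (hne : R.Nonempty)
    (hT : IsolatesEdges G W R T) (hrate : LosesAtRate G W R c)
    (hsum : 82 * (#T : ℤ) ≤ ∑ r ∈ R, gain G W R c r) : Reducible G W := by
  refine ⟨R, T, hR, hne, hT, ?_⟩
  have hsurplus := sum_nonneg fun v hv ↦ sub_nonneg.2 (hrate v (mem_compl.1 hv))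
  linarith [sum_gain_add_sum_surplus_le hmin hR c]

lemma reducible_of_outer_vertex (hmin : ∀ v, 4 ≤ G.degree v) {k : ℤ} {D : ℕ} (hu : u ∉ W)
    (hpos : 0 < degIn G W u) (hrate : LosesAtRate G W (nbrsIn G W u) c)
    (hD : ∀ r ∈ W, degIn G W r ≤ D) (hk : k + outerWeight D + c * D ≤ 26 + 4 * c)
    (hsum : 82 ≤ degIn G W u * k + (outerWeight (degIn G W u) - c * degIn G W u)) :
    Reducible G W := by
  set R := nbrsIn G W u
  have hR : R ⊆ W := nbrsIn_subset
  have hzero : degIn G (W \ R) u = 0 := degIn_sdiff_eq_zero subset_rfl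
  have hdegR : degIn G R u = degIn G W u := by
    rw [← degIn_sdiff_add_degIn hR, hzero, zero_add]
  have hT : IsolatesEdges G W R {u} := isolatesEdges_of_subset_closedNbhd fun r hr ↦
    mem_closedNbhd_of_adj (by simp) (mem_nbrsIn.1 hr).2
  refine ⟨R, {u}, hR, card_pos.1 hpos, hT, ?_⟩
  have hgain : degIn G W u * k ≤ ∑ r ∈ R, gain G W R c r := by
    simpa [degIn] using card_nsmul_le_sum R (gain G W R c) k fun r hr ↦
      le_gain (degIn_sdiff_le.trans (hD r (hR hr))) (hD r (hR hr)) hk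
  have hsurplus := single_le_sum
    (fun v hv ↦ sub_nonneg.2 (hrate v (mem_compl.1 hv))) (mem_compl.2 hu)
  rw [hzero, hdegR, outerWeight_zero] at hsurplus
  have hdrop := sum_gain_add_sum_surplus_le hmin hR c
  rw [card_singleton]
  push_cast
  linarith

lemma reducible_of_inner_vertex (hmin : ∀ v, 4 ≤ G.degree v) {k : ℤ} {D : ℕ} (hv : v ∈ W)
    (hrate : LosesAtRate G W (insert v (nbrsIn G W v)) c)
    (hD : ∀ r ∈ W, degIn G W r ≤ D + 1)
    (hk : k + outerWeight D + c * (D + 1) ≤ 26 + 4 * c)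
    (hsum : 82 ≤ 26 + c * (4 - degIn G W v) + degIn G W v * k) : Reducible G W := by
  set R := insert v (nbrsIn G W v) with hRdef
  have hR : R ⊆ W := insert_subset hv nbrsIn_subset
  have hT : IsolatesEdges G W R {v} := isolatesEdges_of_subset_closedNbhd fun r hr ↦ by
    rcases mem_insert.1 hr with rfl | hr
    · exact mem_closedNbhd_of_mem (by simp)
    · exact mem_closedNbhd_of_adj (by simp) (mem_nbrsIn.1 hr).2
  refine reducible_of_sum_gain hmin hR (insert_nonempty _ _) hT hrate ?_
  have hgain_self : gain G W R c v = 26 + c * (4 - degIn G W v) := by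
    simp [gain, degIn_sdiff_eq_zero (hRdef ▸ subset_insert v _)]
  have hgain_nbrs : degIn G W v * k ≤ ∑ r ∈ nbrsIn G W v, gain G W R c r := by
    refine le_of_eq_of_le (by simp [degIn]) (card_nsmul_le_sum _ _ k fun r hr ↦ ?_)
    have hlt := degIn_sdiff_lt (mem_nbrsIn_comm hv hr) (hRdef ▸ mem_insert_self v _ : v ∈ R)
    have hrD := hD r (nbrsIn_subset hr)
    exact le_gain (by omega : degIn G (W \ R) r ≤ D) hrD (by exact_mod_cast hk)
  rw [sum_insert fun h ↦ ne_of_mem_nbrsIn h rfl, hgain_self, card_singleton]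
  push_cast
  linarith

lemma degIn_pos_of_mem (hmin : ∀ v, 4 ≤ G.degree v) (hW : ¬ Reducible G W) (hv : v ∈ W) :
    0 < degIn G W v := by
  by_contra! hzero
  have hempty : nbrsIn G W v = ∅ := card_eq_zero.1 (Nat.le_zero.1 hzero)
  refine hW (reducible_of_sum_gain (R := {v}) (T := ∅) hmin (singleton_subset_iff.2 hv)
    (singleton_nonempty v) ?_ losesAtRate_zero ?_)
  · simp [IsolatesEdges, hempty]
  · simpa using le_gain (c := 0) (degIn_sdiff_le.trans hzero) hzero (by decide)

lemma degIn_le_four_of_mem (hmin : ∀ v, 4 ≤ G.degree v) (hW : ¬ Reducible G W) (hv : v ∈ W) :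
    degIn G W v ≤ 4 := by
  by_contra! hfive
  have hD : ∀ r ∈ W, degIn G W r ≤ #W + 1 := fun _ _ ↦ degIn_le_card.trans (Nat.le_succ _)
  refine hW (reducible_of_inner_vertex (k := 12) hmin hv losesAtRate_zero hD ?_ ?_)
  · have := outerWeight_le #W
    push_cast
    linarith
  · omega

lemma degIn_le_three_of_mem (hmin : ∀ v, 4 ≤ G.degree v) (hW : ¬ Reducible G W) (hv : v ∈ W) :
    degIn G W v ≤ 3 := by
  have hin : ∀ r ∈ W, degIn G W r ≤ 4 := fun _ ↦ degIn_le_four_of_mem hmin hW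
  by_contra! hfour
  refine hW (reducible_of_inner_vertex (k := 14) hmin hv losesAtRate_zero hin (by decide) ?_)
  omega

lemma degIn_le_four_of_notMem (hmin : ∀ v, 4 ≤ G.degree v) (hW : ¬ Reducible G W)
    (hu : u ∉ W) : degIn G W u ≤ 4 := by
  have hin : ∀ r ∈ W, degIn G W r ≤ 3 := fun _ ↦ degIn_le_three_of_mem hmin hW
  by_contra! hfive
  refine hW (reducible_of_outer_vertex (k := 14) hmin hu (by omega) losesAtRate_zero hin
    (by decide) ?_)
  rw [outerWeight_of_four_le hfive.le]
  omega

lemma losesAtRate_two_of_not_reducible (hmin : ∀ v, 4 ≤ G.degree v) (hW : ¬ Reducible G W)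
    (hR : R ⊆ W) : LosesAtRate G W R 2 :=
  losesAtRate_two (fun _ ↦ degIn_le_four_of_notMem hmin hW) hR

lemma degIn_le_two_of_mem (hmin : ∀ v, 4 ≤ G.degree v) (hW : ¬ Reducible G W) (hv : v ∈ W) :
    degIn G W v ≤ 2 := by
  have hin : ∀ r ∈ W, degIn G W r ≤ 3 := fun _ ↦ degIn_le_three_of_mem hmin hW
  by_contra! hthree
  refine hW (reducible_of_inner_vertex (k := 18) hmin hv (losesAtRate_two_of_not_reducible hmin
    hW (insert_subset hv nbrsIn_subset)) hin (by decide) ?_)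
  have := hin v hv
  omega

lemma degIn_le_three_of_notMem (hmin : ∀ v, 4 ≤ G.degree v) (hW : ¬ Reducible G W)
    (hu : u ∉ W) : degIn G W u ≤ 3 := by
  have hin : ∀ r ∈ W, degIn G W r ≤ 2 := fun _ ↦ degIn_le_two_of_mem hmin hW
  have hfour : degIn G W u ≤ 4 := degIn_le_four_of_notMem hmin hW hu
  by_contra! hthree
  refine hW (reducible_of_outer_vertex (k := 20) hmin hu (by omega)
    (losesAtRate_two_of_not_reducible hmin hW nbrsIn_subset) hin (by decide) ?_)
  rw [outerWeight_of_four_le hthree]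
  omega

end Reductions

/-- In `G[W]`, the vertex `v` has exactly two neighbors, `x` and `y`. -/
structure IsMidpoint (G : SimpleGraph V) (W : Finset V) (x v y : V) : Prop where
  mem : v ∈ W
  ne : x ≠ y
  nbrsIn_eq : nbrsIn G W v = {x, y}

lemma IsMidpoint.symm (h : IsMidpoint G W x v y) : IsMidpoint G W y v x :=
  ⟨h.mem, h.ne.symm, h.nbrsIn_eq.trans (pair_comm x y)⟩

lemma IsMidpoint.left_mem_nbrsIn (h : IsMidpoint G W x v y) : x ∈ nbrsIn G W v := by
  simp [h.nbrsIn_eq]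

lemma IsMidpoint.right_mem_nbrsIn (h : IsMidpoint G W x v y) : y ∈ nbrsIn G W v :=
  h.symm.left_mem_nbrsIn

lemma IsMidpoint.left_mem (h : IsMidpoint G W x v y) : x ∈ W :=
  nbrsIn_subset h.left_mem_nbrsIn

lemma IsMidpoint.right_mem (h : IsMidpoint G W x v y) : y ∈ W :=
  h.symm.left_mem

lemma IsMidpoint.adj_left (h : IsMidpoint G W x v y) : G.Adj v x :=
  (mem_nbrsIn.1 h.left_mem_nbrsIn).2

lemma IsMidpoint.adj_right (h : IsMidpoint G W x v y) : G.Adj v y :=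
  h.symm.adj_left

lemma IsMidpoint.nbrsIn_subset (h : IsMidpoint G W x v y) (hx : x ∈ R) (hy : y ∈ R) :
    nbrsIn G W v ⊆ R := by
  rw [h.nbrsIn_eq]
  exact insert_subset hx (singleton_subset_iff.2 hy)

lemma isMidpoint_of_degIn_le_two (hv : v ∈ W) (hdeg : degIn G W v ≤ 2)
    (hx : x ∈ nbrsIn G W v) (hy : y ∈ nbrsIn G W v) (hxy : x ≠ y) : IsMidpoint G W x v y := by
  refine ⟨hv, hxy, (eq_of_subset_of_card_le ?_ ?_).symm⟩
  · exact insert_subset hx (singleton_subset_iff.2 hy)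
  · rwa [card_pair hxy]

lemma exists_isMidpoint_of_degIn_eq_two (hv : v ∈ W) (hdeg : degIn G W v = 2) :
    ∃ x y, IsMidpoint G W x v y := by
  obtain ⟨x, y, hxy, heq⟩ := card_eq_two.1 hdeg
  exact ⟨x, y, hv, hxy, heq⟩

lemma IsMidpoint.thirty_le_gain (h : IsMidpoint G W x v y) (hx : x ∈ R) (hy : y ∈ R) :
    30 ≤ gain G W R 2 v :=
  le_gain (degIn_sdiff_eq_zero (h.nbrsIn_subset hx hy)).le
    (h.nbrsIn_eq ▸ card_le_two : #(nbrsIn G W v) ≤ 2) (by decide)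

lemma twentyFive_le_gain (hdeg : degIn G W v ≤ 2) (hx : x ∈ nbrsIn G W v) (hxR : x ∈ R) :
    25 ≤ gain G W R 2 v :=
  le_gain (Nat.le_of_lt_succ ((degIn_sdiff_lt hx hxR).trans_le hdeg)) hdeg (by decide)

section Paths

variable [Fintype V] {v₀ v₁ v₂ v₃ v₄ v₅ : V}

/-- Otherwise `y` has no neighbor in `W` outside `{x, v}`, so that `v` pays for isolating the
edges at `x`, `v` and `y`. -/
lemma IsMidpoint.exists_next (hmin : ∀ v, 4 ≤ G.degree v) (hW : ¬ Reducible G W)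
    (h : IsMidpoint G W x v y) : ∃ z, z ≠ x ∧ IsMidpoint G W v y z := by
  have hin : ∀ r ∈ W, degIn G W r ≤ 2 := fun _ ↦ degIn_le_two_of_mem hmin hW
  have hvy : v ∈ nbrsIn G W y := mem_nbrsIn_comm h.mem h.right_mem_nbrsIn
  have hvx : v ∈ nbrsIn G W x := mem_nbrsIn_comm h.mem h.left_mem_nbrsIn
  by_contra! hnone
  have hclosed : nbrsIn G W y ⊆ {x, v, y} := fun z hz ↦ by
    by_contra hzR
    simp only [mem_insert, mem_singleton, not_or] at hzR
    exact hnone z hzR.1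
      (isMidpoint_of_degIn_le_two h.right_mem (hin y h.right_mem) hvy hz (Ne.symm hzR.2.1))
  have hR : {x, v, y} ⊆ W := by
    simp [insert_subset_iff, h.left_mem, h.mem, h.right_mem]
  have hT : IsolatesEdges G W {x, v, y} {v} := isolatesEdges_of_subset_closedNbhd <| by
    simp [closedNbhd, h.adj_left, h.adj_right]
  refine hW (reducible_of_sum_gain hmin hR (insert_nonempty _ _) hT
    (losesAtRate_two_of_not_reducible hmin hW hR) ?_)
  have hgain_x := twentyFive_le_gain (R := {x, v, y}) (hin x h.left_mem) hvx (by simp)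
  have hgain_v := h.thirty_le_gain (R := {x, v, y}) (by simp) (by simp)
  have hgain_y : 30 ≤ gain G W {x, v, y} 2 y :=
    le_gain (degIn_sdiff_eq_zero hclosed).le (hin y h.right_mem) (by decide)
  rw [sum_insert (by simp [h.ne, h.adj_left.ne']), sum_pair h.adj_right.ne, card_singleton]
  push_cast
  linarith

lemma reducible_of_four_cycle (hmin : ∀ v, 4 ≤ G.degree v) (h₁ : IsMidpoint G W v₀ v₁ v₂)
    (h₂ : IsMidpoint G W v₁ v₂ v₃) (h₃ : IsMidpoint G W v₂ v₃ v₀) : Reducible G W := by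
  by_contra hW
  have hin : ∀ r ∈ W, degIn G W r ≤ 2 := fun _ ↦ degIn_le_two_of_mem hmin hW
  have hR : {v₀, v₁, v₂, v₃} ⊆ W := by
    simp [insert_subset_iff, h₁.left_mem, h₁.mem, h₂.mem, h₃.mem]
  have hT : IsolatesEdges G W {v₀, v₁, v₂, v₃} {v₁} := by
    simp [IsolatesEdges, closedNbhd, h₁.adj_left, h₁.adj_right, h₃.nbrsIn_eq]
  have hgain : ∀ r ∈ ({v₀, v₁, v₂, v₃} : Finset V), 25 ≤ gain G W {v₀, v₁, v₂, v₃} 2 r := by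
    have h₀ := mem_nbrsIn_comm h₁.mem h₁.left_mem_nbrsIn
    simp only [forall_mem_insert, mem_singleton, forall_eq]
    exact ⟨twentyFive_le_gain (hin v₀ h₁.left_mem) h₀ (by simp),
      twentyFive_le_gain (hin v₁ h₁.mem) h₁.left_mem_nbrsIn (by simp),
      twentyFive_le_gain (hin v₂ h₂.mem) h₂.left_mem_nbrsIn (by simp),
      twentyFive_le_gain (hin v₃ h₃.mem) h₃.left_mem_nbrsIn (by simp)⟩
  have hcard : #{v₀, v₁, v₂, v₃} = 4 := by
    rw [card_insert_of_notMem (by simp [h₁.adj_left.ne', h₁.ne, h₃.adj_right.ne']),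
      card_insert_of_notMem (by simp [h₁.adj_right.ne, h₂.ne]), card_pair h₂.adj_right.ne]
  refine hW (reducible_of_sum_gain hmin hR (insert_nonempty _ _) hT
    (losesAtRate_two_of_not_reducible hmin hW hR)
    (le_trans ?_ (card_nsmul_le_sum _ _ 25 hgain)))
  simp [hcard]

lemma reducible_of_six_path (hmin : ∀ v, 4 ≤ G.degree v)
    (hnodup : [v₀, v₁, v₂, v₃, v₄, v₅].Nodup) (h₁ : IsMidpoint G W v₀ v₁ v₂)
    (h₂ : IsMidpoint G W v₁ v₂ v₃) (h₃ : IsMidpoint G W v₂ v₃ v₄)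
    (h₄ : IsMidpoint G W v₃ v₄ v₅) : Reducible G W := by
  by_contra hW
  have hin : ∀ r ∈ W, degIn G W r ≤ 2 := fun _ ↦ degIn_le_two_of_mem hmin hW
  set R := [v₀, v₁, v₂, v₃, v₄, v₅].toFinset with hRdef
  have hR : R ⊆ W := by
    simp [hRdef, insert_subset_iff, h₁.left_mem, h₁.mem, h₂.mem, h₃.mem, h₄.mem, h₄.right_mem]
  have hT : IsolatesEdges G W R {v₁, v₄} := isolatesEdges_of_subset_closedNbhd <| by
    simp [hRdef, closedNbhd, h₁.adj_left, h₁.adj_right, h₄.adj_left, h₄.adj_right]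
  refine hW (reducible_of_sum_gain hmin hR ⟨v₀, by simp [hRdef]⟩ hT
    (losesAtRate_two_of_not_reducible hmin hW hR) ?_)
  have hgain₀ := twentyFive_le_gain (R := R) (hin v₀ h₁.left_mem)
    (mem_nbrsIn_comm h₁.mem h₁.left_mem_nbrsIn) (by simp [hRdef])
  have hgain₁ := h₁.thirty_le_gain (R := R) (by simp [hRdef]) (by simp [hRdef])
  have hgain₂ := h₂.thirty_le_gain (R := R) (by simp [hRdef]) (by simp [hRdef])
  have hgain₃ := h₃.thirty_le_gain (R := R) (by simp [hRdef]) (by simp [hRdef])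
  have hgain₄ := h₄.thirty_le_gain (R := R) (by simp [hRdef]) (by simp [hRdef])
  have hgain₅ := twentyFive_le_gain (R := R) (hin v₅ h₄.right_mem)
    (mem_nbrsIn_comm h₄.mem h₄.right_mem_nbrsIn) (by simp [hRdef])
  have hcard : (#{v₁, v₄} : ℤ) ≤ 2 := mod_cast card_le_two
  have hsum : ∑ r ∈ R, gain G W R 2 r = gain G W R 2 v₀ + (gain G W R 2 v₁ + (gain G W R 2 v₂ +
      (gain G W R 2 v₃ + (gain G W R 2 v₄ + gain G W R 2 v₅)))) := by
    exact (List.sum_toFinset (gain G W R 2) hnodup).trans (by simp)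
  linarith

end Paths

/-- `f` runs around a connected component of `G[W]` that is a cycle of length five. -/
def IsPentagon (G : SimpleGraph V) (W : Finset V) (f : Fin 5 → V) : Prop :=
  ∀ i, IsMidpoint G W (f (i - 1)) (f i) (f (i + 1))

lemma IsPentagon.injective {f : Fin 5 → V} (hf : IsPentagon G W f) : Function.Injective f := by
  have hdist : ∀ i j : Fin 5, i ≠ j →
      j = i + 1 ∨ j = i - 1 ∨ ∃ k, i = k - 1 ∧ j = k + 1 ∨ i = k + 1 ∧ j = k - 1 := by
    decide
  intro i j hij
  by_contra hne
  rcases hdist i j hne with rfl | rfl | ⟨k, ⟨rfl, rfl⟩ | ⟨rfl, rfl⟩⟩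
  · exact (hf i).adj_right.ne hij
  · exact (hf i).adj_left.ne hij
  · exact (hf k).ne hij
  · exact (hf k).ne hij.symm

lemma IsPentagon.rotate {f : Fin 5 → V} (hf : IsPentagon G W f) (i : Fin 5) :
    IsPentagon G W fun j ↦ f (i + j) := fun j ↦ by
  simpa only [add_sub_assoc, add_assoc] using hf (i + j)

lemma exists_isPentagon [Fintype V] (hmin : ∀ v, 4 ≤ G.degree v) (hW : ¬ Reducible G W)
    (hv : v ∈ W) (hdeg : degIn G W v = 2) : ∃ f, IsPentagon G W f := by
  obtain ⟨v₀, v₂, h₁⟩ := exists_isMidpoint_of_degIn_eq_two hv hdeg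
  obtain ⟨v₃, h₃₀, h₂⟩ := h₁.exists_next hmin hW
  obtain ⟨v₄, h₄₁, h₃⟩ := h₂.exists_next hmin hW
  obtain ⟨v₅, h₅₂, h₄⟩ := h₃.exists_next hmin hW
  have h₄₀ : v₄ ≠ v₀ := by
    rintro rfl
    exact hW (reducible_of_four_cycle hmin h₁ h₂ h₃)
  have h₅₁ : v₅ ≠ v := by
    rintro rfl
    exact hW (reducible_of_four_cycle hmin h₂ h₃ h₄)
  have h₅₀ : v₅ = v₀ := by
    by_contra h₅₀
    refine hW (reducible_of_six_path hmin ?_ h₁ h₂ h₃ h₄)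
    simp [h₁.adj_left.ne', h₁.ne, h₁.adj_right.ne, h₂.ne, h₂.adj_right.ne, h₃.ne,
      h₃.adj_right.ne, h₄.ne, h₄.adj_right.ne, h₃₀.symm, h₄₁.symm, h₅₂.symm, h₄₀.symm, h₅₁.symm,
      Ne.symm h₅₀]
  subst h₅₀
  have h₀ : IsMidpoint G W v₄ v₅ v :=
    isMidpoint_of_degIn_le_two h₁.left_mem (degIn_le_two_of_mem hmin hW h₁.left_mem)
      (mem_nbrsIn_comm h₄.mem h₄.right_mem_nbrsIn) (mem_nbrsIn_comm hv h₁.left_mem_nbrsIn) h₄₁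
  refine ⟨![v₅, v, v₂, v₃, v₄], fun i ↦ ?_⟩
  fin_cases i
  exacts [h₀, h₁, h₂, h₃, h₄]

/-- `C` is a union of connected components of `G[W]`. -/
structure IsClosedIn (G : SimpleGraph V) (W C : Finset V) : Prop where
  subset : C ⊆ W
  nbrsIn_subset : ∀ r ∈ C, nbrsIn G W r ⊆ C

lemma IsPentagon.isClosedIn {f : Fin 5 → V} (hf : IsPentagon G W f) :
    IsClosedIn G W (univ.image f) where
  subset := image_subset_iff.2 fun i _ ↦ (hf i).mem
  nbrsIn_subset := by
    simp only [forall_mem_image]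
    exact fun i _ ↦ (hf i).nbrsIn_subset (by simp) (by simp)

lemma isClosedIn_pair (hx : nbrsIn G W x = {y}) (hy : nbrsIn G W y = {x}) :
    IsClosedIn G W {x, y} where
  subset := insert_subset (nbrsIn_subset (hy ▸ mem_singleton_self x))
    (singleton_subset_iff.2 (nbrsIn_subset (hx ▸ mem_singleton_self y)))
  nbrsIn_subset := by simp [hx, hy]

lemma IsClosedIn.card_mul_le_sum_gain {C : Finset V} {D : ℕ} {k : ℤ} (hC : IsClosedIn G W C)
    (hCR : C ⊆ R) (hD : ∀ r ∈ C, degIn G W r ≤ D) (hk : k + c * D ≤ 26 + 4 * c) :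
    #C * k ≤ ∑ r ∈ C, gain G W R c r := by
  refine le_of_eq_of_le (nsmul_eq_mul _ _).symm (card_nsmul_le_sum _ _ k fun r hr ↦ ?_)
  exact le_gain (degIn_sdiff_eq_zero ((hC.nbrsIn_subset r hr).trans hCR)).le (hD r hr)
    (by simpa using hk)

section Components

variable [Fintype V] {C : Finset V} {D : ℕ} {k l : ℤ}

lemma reducible_of_private_component (hmin : ∀ v, 4 ≤ G.degree v) (hC : IsClosedIn G W C)
    (hne : C.Nonempty) (hT : IsolatesEdges G W C T)
    (hprivate : ∀ v ∉ W, (nbrsIn G C v).Nonempty → nbrsIn G W v ⊆ C)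
    (hc : ∀ v ∉ W, (c : ℤ) * degIn G C v ≤ outerWeight (degIn G C v))
    (hD : ∀ r ∈ C, degIn G W r ≤ D) (hk : k + c * D ≤ 26 + 4 * c)
    (hsum : 82 * (#T : ℤ) ≤ #C * k) : Reducible G W :=
  reducible_of_sum_gain hmin hC.subset hne hT (losesAtRate_of_private hC.subset hprivate hc)
    (hsum.trans (hC.card_mul_le_sum_gain subset_rfl hD hk))

lemma reducible_of_shared_component (hmin : ∀ v, 4 ≤ G.degree v) (hC : IsClosedIn G W C)
    (hz : z ∈ W) (hzC : z ∉ C) (hT : IsolatesEdges G W (insert z C) T)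
    (hrate : LosesAtRate G W (insert z C) c) (hD : ∀ r ∈ W, degIn G W r ≤ D)
    (hk : k + c * D ≤ 26 + 4 * c) (hl : l + outerWeight D + c * D ≤ 26 + 4 * c)
    (hsum : 82 * (#T : ℤ) ≤ l + #C * k) : Reducible G W := by
  refine reducible_of_sum_gain hmin (insert_subset hz hC.subset) (insert_nonempty z C) hT hrate
    (hsum.trans ?_)
  rw [sum_insert hzC]
  exact add_le_add (le_gain (degIn_sdiff_le.trans (hD z hz)) (hD z hz) hl)
    (hC.card_mul_le_sum_gain (subset_insert z C) (fun r hr ↦ hD r (hC.subset hr)) hk)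

lemma reducible_of_shared_pentagon (hmin : ∀ v, 4 ≤ G.degree v) {f : Fin 5 → V}
    (hf : IsPentagon G W f) (huf : G.Adj u (f 0)) (hz : z ∈ nbrsIn G W u)
    (hzf : z ∉ univ.image f) : Reducible G W := by
  by_contra hW
  have hT : IsolatesEdges G W (insert z (univ.image f)) {u, f 2} := by
    have hz_mem : z ∈ closedNbhd G ({u, f 2} : Finset V) :=
      mem_closedNbhd_of_adj (by simp) (mem_nbrsIn.1 hz).2
    have hf_mem : ∀ i ≠ 4, f i ∈ closedNbhd G ({u, f 2} : Finset V) := fun i hi ↦ by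
      fin_cases i
      · exact mem_closedNbhd_of_adj (u := u) (by simp) huf
      · exact mem_closedNbhd_of_adj (u := f 2) (by simp) (hf 2).adj_left
      · exact mem_closedNbhd_of_mem (by simp)
      · exact mem_closedNbhd_of_adj (u := f 2) (by simp) (hf 2).adj_right
      · exact absurd rfl hi
    simp only [IsolatesEdges, forall_mem_insert, forall_mem_image]
    refine ⟨fun _ _ ↦ Or.inl hz_mem, fun i _ w hw ↦ ?_⟩
    by_cases hi : i = 4
    · subst hi
      rw [(hf 4).nbrsIn_eq, mem_insert, mem_singleton] at hw
      rcases hw with rfl | rfl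
      · exact Or.inr (hf_mem _ (by decide))
      · exact Or.inr (hf_mem _ (by decide))
    · exact Or.inl (hf_mem i hi)
  have hzW : z ∈ W := nbrsIn_subset hz
  refine hW (reducible_of_shared_component (k := 30) (l := 20) hmin hf.isClosedIn hzW hzf hT
    (losesAtRate_two_of_not_reducible hmin hW (insert_subset hzW hf.isClosedIn.subset))
    (fun _ ↦ degIn_le_two_of_mem hmin hW) (by decide) (by decide) ?_)
  have hcard : (#{u, f 2} : ℤ) ≤ 2 := mod_cast card_le_two
  rw [card_image_of_injective _ hf.injective, card_univ, Fintype.card_fin]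
  push_cast
  linarith

lemma IsPentagon.reducible (hmin : ∀ v, 4 ≤ G.degree v) {f : Fin 5 → V}
    (hf : IsPentagon G W f) : Reducible G W := by
  by_contra hW
  have hprivate : ∀ u ∉ W, (nbrsIn G (univ.image f) u).Nonempty →
      nbrsIn G W u ⊆ univ.image f := fun u _ hne z hz ↦ by
    by_contra hzf
    obtain ⟨x, hx⟩ := hne
    obtain ⟨hx, hux⟩ := mem_nbrsIn.1 hx
    obtain ⟨i, -, rfl⟩ := mem_image.1 hx
    refine hW (reducible_of_shared_pentagon hmin (hf.rotate i) (by simpa using hux) hz ?_)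
    exact fun h ↦ hzf (image_subset_iff.2 (fun j _ ↦ by simp) h)
  have hrate : ∀ u ∉ W, ((4 : ℕ) : ℤ) * degIn G (univ.image f) u ≤
      outerWeight (degIn G (univ.image f) u) := fun u hu ↦ by
    have hthree : degIn G (univ.image f) u ≤ 3 :=
      (card_le_card (filter_subset_filter _ hf.isClosedIn.subset)).trans
        (degIn_le_three_of_notMem hmin hW hu)
    interval_cases degIn G (univ.image f) u <;> decide
  have hT : IsolatesEdges G W (univ.image f) {f 0, f 2} := by
    refine isolatesEdges_of_subset_closedNbhd ?_
    simp only [forall_mem_image]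
    intro i _
    fin_cases i
    · exact mem_closedNbhd_of_mem (by simp)
    · exact mem_closedNbhd_of_adj (u := f 0) (by simp) (hf 0).adj_right
    · exact mem_closedNbhd_of_mem (by simp)
    · exact mem_closedNbhd_of_adj (u := f 2) (by simp) (hf 2).adj_right
    · exact mem_closedNbhd_of_adj (u := f 0) (by simp) (hf 0).adj_left
  refine hW (reducible_of_private_component (k := 34) hmin hf.isClosedIn ⟨f 0, by simp⟩ hT hprivate
    hrate (fun r hr ↦ degIn_le_two_of_mem hmin hW (hf.isClosedIn.subset hr)) (by decide) ?_)
  have hcard : (#{f 0, f 2} : ℤ) ≤ 2 := mod_cast card_le_two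
  rw [card_image_of_injective _ hf.injective, card_univ, Fintype.card_fin]
  push_cast
  linarith

lemma reducible_of_shared_edge (hmin : ∀ v, 4 ≤ G.degree v)
    (hone : ∀ r ∈ W, degIn G W r ≤ 1) (hx : nbrsIn G W x = {y})
    (hy : nbrsIn G W y = {x}) (hux : G.Adj u x) (hz : z ∈ nbrsIn G W u)
    (hzC : z ∉ ({x, y} : Finset V)) : Reducible G W := by
  by_contra hW
  have hzW : z ∈ W := nbrsIn_subset hz
  have hC := isClosedIn_pair hx hy
  have hT : IsolatesEdges G W {z, x, y} {u} := by
    simp [IsolatesEdges, closedNbhd, hux, (mem_nbrsIn.1 hz).2, hy]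
  refine hW (reducible_of_shared_component (k := 32) (l := 27) hmin hC hzW hzC hT
    (losesAtRate_two_of_not_reducible hmin hW (insert_subset hzW hC.subset)) hone (by decide)
    (by decide) ?_)
  have hxy : x ≠ y := (ne_of_mem_nbrsIn (hx ▸ mem_singleton_self y)).symm
  simp [card_pair hxy]

lemma reducible_of_edge (hmin : ∀ v, 4 ≤ G.degree v) (hone : ∀ r ∈ W, degIn G W r ≤ 1)
    (hx : nbrsIn G W x = {y}) (hy : nbrsIn G W y = {x}) : Reducible G W := by
  by_contra hW
  have hyx : y ∈ nbrsIn G W x := hx ▸ mem_singleton_self y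
  have hC := isClosedIn_pair hx hy
  have hcard : #{x, y} = 2 := card_pair (ne_of_mem_nbrsIn hyx).symm
  have hprivate : ∀ u ∉ W, (nbrsIn G {x, y} u).Nonempty → nbrsIn G W u ⊆ {x, y} := by
    rintro u - ⟨v, hv⟩ z hz
    by_contra hzC
    obtain ⟨hv, huv⟩ := mem_nbrsIn.1 hv
    rcases mem_insert.1 hv with rfl | hv
    · exact hW (reducible_of_shared_edge hmin hone hx hy huv hz hzC)
    · rw [mem_singleton.1 hv] at huv
      exact hW (reducible_of_shared_edge hmin hone hy hx huv hz (pair_comm x y ▸ hzC))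
  have hrate : ∀ u ∉ W, ((5 : ℕ) : ℤ) * degIn G {x, y} u ≤ outerWeight (degIn G {x, y} u) :=
    fun u _ ↦ by
      have htwo : degIn G {x, y} u ≤ 2 := degIn_le_card.trans hcard.le
      interval_cases degIn G {x, y} u <;> decide
  have hT : IsolatesEdges G W {x, y} {x} := isolatesEdges_of_subset_closedNbhd <| by
    simp [closedNbhd, (mem_nbrsIn.1 hyx).2]
  refine hW (reducible_of_private_component (k := 41) hmin hC (insert_nonempty _ _) hT hprivate
    hrate (fun r hr ↦ hone r (hC.subset hr)) (by decide) ?_)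
  simp [hcard]

lemma reducible_of_nonempty (hmin : ∀ v, 4 ≤ G.degree v) (hne : W.Nonempty) :
    Reducible G W := by
  by_contra hW
  have hone : ∀ v ∈ W, degIn G W v = 1 := fun v hv ↦ by
    have hpos := degIn_pos_of_mem hmin hW hv
    have hle := degIn_le_two_of_mem hmin hW hv
    have hne_two : degIn G W v ≠ 2 := fun htwo ↦ by
      obtain ⟨f, hf⟩ := exists_isPentagon hmin hW hv htwo
      exact hW (hf.reducible hmin)
    omega
  obtain ⟨x, hxW⟩ := hne
  obtain ⟨y, hx⟩ := card_eq_one.1 (hone x hxW)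
  have hyx : y ∈ nbrsIn G W x := hx ▸ mem_singleton_self y
  obtain ⟨x', hy⟩ := card_eq_one.1 (hone y (nbrsIn_subset hyx))
  obtain rfl : x = x' := mem_singleton.1 (hy ▸ mem_nbrsIn_comm hxW hyx)
  exact hW (reducible_of_edge hmin (fun r hr ↦ (hone r hr).le) hx hy)

end Components

lemma exists_isolatesEdges_card_le_potential [Fintype V] (hmin : ∀ v, 4 ≤ G.degree v)
    (W : Finset V) : ∃ S, IsolatesEdges G W W S ∧ 82 * (#S : ℤ) ≤ potential G W := by
  induction W using Finset.strongInduction with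
  | H W ih =>
    rcases W.eq_empty_or_nonempty with rfl | hne
    · exact ⟨∅, by simp [IsolatesEdges], by simpa using potential_nonneg⟩
    · obtain ⟨R, T, hR, hRne, hT, hpot⟩ := reducible_of_nonempty hmin hne
      obtain ⟨S, hS, hcard⟩ := ih (W \ R) (sdiff_ssubset hR hRne)
      refine ⟨S ∪ T, hT.union hS, ?_⟩
      have := card_union_le S T
      omega

end IsolationNumber

/-- If `G` has order `n` and minimum degree at least 4, then `ι(G) ≤ 13n/41`. -/
theorem isolation_number_minDegree_four {V : Type*} [Fintype V] (G : SimpleGraph V) (n : ℕ)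
    (hn : Fintype.card V = n) (hmin : ∀ v : V, 4 ≤ (G.neighborSet v).ncard) :
    (isolationNumber G : ℝ) ≤ 13 * n / 41 := by
  have hdeg : ∀ v, 4 ≤ G.degree v := fun v ↦ by
    rw [← G.card_neighborSet_eq_degree, ← Nat.card_eq_fintype_card, Nat.card_coe_set_eq]
    exact hmin v
  obtain ⟨S, hS, hcard⟩ :=
    IsolationNumber.exists_isolatesEdges_card_le_potential hdeg Finset.univ
  have hle : isolationNumber G ≤ S.card := by
    simpa using IsolationNumber.isolationNumber_le_ncard hS.isIsolatingSet
  rw [IsolationNumber.potential_univ, hn] at hcard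
  have hmul : (41 : ℝ) * isolationNumber G ≤ 13 * n := by
    exact_mod_cast (by omega : 41 * isolationNumber G ≤ 13 * n)
  linarith
end

section
/- If G is a graph of order n with minimum degree at least 5, then ι(G) ≤ 23n/78. -/
open Classical

/-!
The isolating set is built greedily. Call a vertex *white* while it is undominated and still has an
undominated neighbor, and *blue* otherwise. A white vertex weighs `23`; a blue vertex with `k` white
neighbors weighs `0, 4, 8, 10, 12` for `k = 0, …, 4` and `13` for `k ≥ 5`. The total weight is
`23 n` at the start and `0` once no vertex is white, so it suffices that some vertex can always be
chosen whose selection lowers the weight by at least `78`.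

Let `p` and `q` be the largest number of white neighbors of a white and of a blue vertex. If
`p ≥ 5` or `q ≤ p + 1`, choose a white vertex attaining `p`, and otherwise a blue vertex attaining
`q`. The selected vertex and its white neighbors become blue. As the minimum degree is at least `5`
and a white vertex has at most `p` white neighbors, each vertex that turns blue has at least `5 - p`
blue neighbors, and for every such adjacency the blue end loses at least the smallest increment of
the weights of blue vertices with up to `q` white neighbors.
-/

namespace Isolation

open Finset

variable {V : Type*} {G : SimpleGraph V}

section DegIn

/-- The number of neighbors of `v` that lie in `W`; in the greedy process `W` is the set of white
vertices. -/
noncomputable def degIn (G : SimpleGraph V) (W : Finset V) (v : V) : ℕ := #{w ∈ W | G.Adj v w}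

variable {U W : Finset V} {u v : V}

lemma degIn_pos_iff : 0 < degIn G W v ↔ ∃ w ∈ W, G.Adj v w := by
  simp only [degIn, card_pos, filter_nonempty_iff]

lemma degIn_mono (h : U ⊆ W) (v : V) : degIn G U v ≤ degIn G W v :=
  card_le_card (filter_subset_filter _ h)

lemma degIn_union (h : Disjoint U W) (v : V) :
    degIn G (U ∪ W) v = degIn G U v + degIn G W v := by
  rw [degIn, filter_union, card_union_of_disjoint (disjoint_filter_filter h), degIn, degIn]

lemma degIn_singleton_of_adj (h : G.Adj u v) : degIn G {v} u = 1 := by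
  rw [degIn, filter_singleton, if_pos h, card_singleton]

lemma degIn_le_degIn_erase_add_one (W : Finset V) (u v : V) :
    degIn G W u ≤ degIn G (W.erase v) u + 1 := by
  rw [degIn, degIn, filter_erase]
  exact Nat.sub_le_iff_le_add.1 pred_card_le_card_erase

lemma degIn_univ_eq_ncard_neighborSet [Fintype V] (v : V) :
    degIn G univ v = (G.neighborSet v).ncard := by
  rw [degIn, ← Set.ncard_coe_finset, coe_filter_univ]
  rfl

lemma degIn_add_degIn_compl [Fintype V] (W : Finset V) (v : V) :
    degIn G W v + degIn G Wᶜ v = (G.neighborSet v).ncard := by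
  rw [← degIn_union disjoint_compl_right, union_compl, degIn_univ_eq_ncard_neighborSet]

lemma sum_degIn_comm (U W : Finset V) : ∑ u ∈ U, degIn G W u = ∑ w ∈ W, degIn G U w := by
  have h := sum_card_bipartiteAbove_eq_sum_card_bipartiteBelow (s := U) (t := W) G.Adj
  simpa only [bipartiteAbove, bipartiteBelow, G.adj_comm _, degIn] using h

end DegIn

section Remaining

lemma closedNbhd_insert (G : SimpleGraph V) (v : V) (S : Set V) :
    closedNbhd G (insert v S) = closedNbhd G {v} ∪ closedNbhd G S := by
  ext x
  simp only [closedNbhd, Set.mem_insert_iff, Set.mem_singleton_iff, Set.mem_ofPred_eq,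
    Set.mem_union, exists_eq_or_imp, exists_eq_left]
  tauto

/-- Every edge of `G` with both ends in `W` meets `N[S]`; for `W = univ` this is
`IsIsolatingSet`. It is the part of the problem still to be solved when the white set is `W`. -/
def IsIsolatingOn (G : SimpleGraph V) (W : Finset V) (S : Set V) : Prop :=
  ∀ u ∈ W, ∀ w ∈ W, G.Adj u w → u ∈ closedNbhd G S ∨ w ∈ closedNbhd G S

/-- The vertices of `W` that are not isolated in the subgraph of `G` induced by `W`. -/
noncomputable def nonisolated (G : SimpleGraph V) (W : Finset V) : Finset V :=
  {w ∈ W | 0 < degIn G W w}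

/-- The white vertices left over after `v` has been selected, when the white set was `W`. -/
noncomputable def remaining (G : SimpleGraph V) (W : Finset V) (v : V) : Finset V :=
  nonisolated G {w ∈ W | w ∉ closedNbhd G {v}}

variable {W : Finset V} {u v : V}

lemma mem_nonisolated : u ∈ nonisolated G W ↔ u ∈ W ∧ ∃ w ∈ W, G.Adj u w := by
  rw [nonisolated, mem_filter, degIn_pos_iff]

lemma degIn_nonisolated_pos (hu : u ∈ nonisolated G W) : 0 < degIn G (nonisolated G W) u := by
  obtain ⟨huW, w, hwW, huw⟩ := mem_nonisolated.1 hu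
  exact degIn_pos_iff.2 ⟨w, mem_nonisolated.2 ⟨hwW, u, huW, huw.symm⟩, huw⟩

lemma remaining_subset (G : SimpleGraph V) (W : Finset V) (v : V) : remaining G W v ⊆ W :=
  (filter_subset _ _).trans (filter_subset _ _)

lemma notMem_closedNbhd_of_mem_remaining (hu : u ∈ remaining G W v) : u ∉ closedNbhd G {v} :=
  (mem_filter.1 (mem_nonisolated.1 hu).1).2

lemma not_adj_of_mem_remaining (hu : u ∈ remaining G W v) : ¬ G.Adj v u :=
  fun h => notMem_closedNbhd_of_mem_remaining hu (Or.inr ⟨v, rfl, h⟩)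

lemma self_notMem_remaining (G : SimpleGraph V) (W : Finset V) (v : V) : v ∉ remaining G W v :=
  fun h => notMem_closedNbhd_of_mem_remaining h (Or.inl rfl)

lemma degIn_remaining_self (G : SimpleGraph V) (W : Finset V) (v : V) :
    degIn G (remaining G W v) v = 0 :=
  card_eq_zero.2 (filter_eq_empty_iff.2 fun _ hu => not_adj_of_mem_remaining hu)

lemma filter_adj_subset_sdiff_remaining (G : SimpleGraph V) (W : Finset V) (v : V) :
    {w ∈ W | G.Adj v w} ⊆ W \ remaining G W v := fun _ hu =>
  mem_sdiff.2 ⟨(mem_filter.1 hu).1, fun h => not_adj_of_mem_remaining h (mem_filter.1 hu).2⟩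

lemma degIn_remaining_lt (hv : v ∈ W) (huv : G.Adj u v) :
    degIn G (remaining G W v) u < degIn G W u := by
  calc degIn G (remaining G W v) u
      < degIn G (remaining G W v) u + degIn G {v} u := by simp [degIn_singleton_of_adj huv]
    _ = degIn G (remaining G W v ∪ {v}) u :=
        (degIn_union (disjoint_singleton_right.2 (self_notMem_remaining G W v)) u).symm
    _ ≤ degIn G W u :=
        degIn_mono (union_subset (remaining_subset G W v) (singleton_subset_iff.2 hv)) u

lemma IsIsolatingOn.insert {S : Set V} (hS : IsIsolatingOn G (remaining G W v) S) :
    IsIsolatingOn G W (insert v S) := by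
  intro u hu w hw huw
  rw [closedNbhd_insert, Set.mem_union, Set.mem_union]
  by_cases hu' : u ∈ closedNbhd G {v}
  · exact Or.inl (Or.inl hu')
  by_cases hw' : w ∈ closedNbhd G {v}
  · exact Or.inr (Or.inl hw')
  have huU : u ∈ ({x ∈ W | x ∉ closedNbhd G {v}} : Finset V) := mem_filter.2 ⟨hu, hu'⟩
  have hwU : w ∈ ({x ∈ W | x ∉ closedNbhd G {v}} : Finset V) := mem_filter.2 ⟨hw, hw'⟩
  exact (hS u (mem_nonisolated.2 ⟨huU, w, hwU, huw⟩) w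
    (mem_nonisolated.2 ⟨hwU, u, huU, huw.symm⟩) huw).imp Or.inr Or.inr

end Remaining

section Slope

variable {δ : ℤ} {b : ℕ → ℤ}

lemma slope_mul_le_sub_of_le {m j k : ℕ} (hδ : 0 ≤ δ) (hb : ∀ i < m, b i + δ ≤ b (i + 1))
    (hjk : j + k ≤ m) : δ * k ≤ b m - b j := by
  induction m, (Nat.le_of_add_right_le hjk) using Nat.le_induction generalizing k with
  | base =>
    obtain rfl : k = 0 := by omega
    simp
  | succ m hjm ih =>
    have hstep := hb m m.lt_succ_self
    have hm := fun k => ih (k := k) fun i hi => hb i (hi.trans m.lt_succ_self)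
    cases k with
    | zero => linarith [hm 0 hjm]
    | succ k => push_cast; linarith [hm k (by omega)]

variable {W W' T X : Finset V}

lemma slope_mul_sum_degIn_le (hδ : 0 ≤ δ)
    (hslope : ∀ x ∈ X, ∀ i < degIn G W x, b i + δ ≤ b (i + 1)) (hW : W' ⊆ W) (hT : T ⊆ W \ W') :
    ∑ u ∈ T, δ * degIn G X u ≤ ∑ x ∈ X, (b (degIn G W x) - b (degIn G W' x)) := by
  have hdisj : Disjoint W' T := disjoint_sdiff.mono_right hT
  have hsub : W' ∪ T ⊆ W := union_subset hW (hT.trans sdiff_subset)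
  calc ∑ u ∈ T, δ * (degIn G X u : ℤ) = ∑ x ∈ X, δ * (degIn G T x : ℤ) := by
        rw [← mul_sum, ← mul_sum]
        exact_mod_cast congrArg (fun m : ℕ => δ * (m : ℤ)) (sum_degIn_comm T X)
    _ ≤ ∑ x ∈ X, (b (degIn G W x) - b (degIn G W' x)) := sum_le_sum fun x hx =>
        slope_mul_le_sub_of_le hδ (hslope x hx) ((degIn_union hdisj x).symm.trans_le
          (degIn_mono hsub x))

end Slope

section Potential

variable [Fintype V]

/-- The total weight when `W` is the set of white vertices: a white vertex weighs `a` and a blue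
vertex with `k` white neighbors weighs `b k`. -/
noncomputable def potential (G : SimpleGraph V) (a : ℤ) (b : ℕ → ℤ) (W : Finset V) : ℤ :=
  a * #W + ∑ x ∈ Wᶜ, b (degIn G W x)

variable {a c δ : ℤ} {b : ℕ → ℤ} {W W' T : Finset V} {v : V} {d p q : ℕ}

lemma potential_empty : potential G a b ∅ = b 0 * Fintype.card V := by
  simp [potential, degIn, mul_comm]

lemma potential_univ : potential G a b univ = a * Fintype.card V := by
  simp [potential]

theorem exists_isIsolatingOn_of_potential_drop (hb0 : 0 ≤ b 0) (hc : 0 < c)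
    (hdrop : ∀ W : Finset V, W.Nonempty → (∀ w ∈ W, 0 < degIn G W w) →
      ∃ v, potential G a b (remaining G W v) + c ≤ potential G a b W)
    (W : Finset V) (hW : ∀ w ∈ W, 0 < degIn G W w) :
    ∃ S : Finset V, IsIsolatingOn G W S ∧ c * #S ≤ potential G a b W := by
  induction W using Finset.strongInduction with
  | H W ih =>
    rcases W.eq_empty_or_nonempty with rfl | hne
    · refine ⟨∅, by simp [IsIsolatingOn], ?_⟩
      rw [potential_empty, card_empty, Nat.cast_zero, mul_zero]
      positivity
    obtain ⟨v, hv⟩ := hdrop W hne hW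
    have hssub : remaining G W v ⊂ W := by
      refine (remaining_subset G W v).ssubset_of_ne fun h => ?_
      rw [h] at hv
      linarith
    obtain ⟨S, hS, hcard⟩ := ih _ hssub fun _ hw => degIn_nonisolated_pos hw
    refine ⟨insert v S, by simpa only [coe_insert] using hS.insert, ?_⟩
    calc c * (#(insert v S) : ℤ) ≤ c * (#S + 1) := by
          gcongr
          exact_mod_cast card_insert_le v S
      _ ≤ potential G a b W := by linarith

theorem mul_isolationNumber_le_of_potential_drop (hb0 : 0 ≤ b 0) (hc : 0 < c)
    (hdrop : ∀ W : Finset V, W.Nonempty → (∀ w ∈ W, 0 < degIn G W w) →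
      ∃ v, potential G a b (remaining G W v) + c ≤ potential G a b W)
    (hpos : ∀ v, 0 < (G.neighborSet v).ncard) :
    c * isolationNumber G ≤ a * Fintype.card V := by
  obtain ⟨S, hS, hcard⟩ := exists_isIsolatingOn_of_potential_drop hb0 hc hdrop univ
    fun w _ => (hpos w).trans_eq (degIn_univ_eq_ncard_neighborSet w).symm
  have hle : isolationNumber G ≤ #S :=
    Nat.sInf_le ⟨S, fun u w => hS u (mem_univ u) w (mem_univ w), Set.ncard_coe_finset S⟩
  calc c * (isolationNumber G : ℤ) ≤ c * #S := by gcongr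
    _ ≤ a * Fintype.card V := by rwa [potential_univ] at hcard

lemma potential_add_sum_sdiff (hW : W' ⊆ W) :
    potential G a b W' + ∑ u ∈ W \ W', (a - b (degIn G W' u))
      + ∑ x ∈ Wᶜ, (b (degIn G W x) - b (degIn G W' x)) = potential G a b W := by
  have hcompl : W'ᶜ \ Wᶜ = W \ W' := by rw [compl_sdiff_compl]
  have hcard : (#(W \ W') : ℤ) = #W - #W' := by
    rw [card_sdiff_of_subset hW, Nat.cast_sub (card_le_card hW)]
  rw [potential, potential, ← sum_sdiff (compl_subset_compl.2 hW), hcompl, sum_sub_distrib,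
    sum_sub_distrib, sum_const, nsmul_eq_mul, hcard]
  ring

lemma potential_add_sum_le (hba : ∀ k, b k ≤ a) (hW : W' ⊆ W) (hT : T ⊆ W \ W') :
    potential G a b W' + ∑ u ∈ T, (a - b (degIn G W' u))
      + ∑ x ∈ Wᶜ, (b (degIn G W x) - b (degIn G W' x)) ≤ potential G a b W := by
  rw [← potential_add_sum_sdiff hW]
  gcongr
  exact fun _ _ _ => sub_nonneg.2 (hba _)

lemma sub_le_degIn_compl (hd : ∀ v, d ≤ (G.neighborSet v).ncard) {u : V} (hu : degIn G W u ≤ p) :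
    (d : ℤ) - p ≤ degIn G Wᶜ u := by
  have := hd u
  have := degIn_add_degIn_compl (G := G) W u
  omega

/-- The truncated `p - 1` is harmless: at `p = 0` the term containing it is multiplied by `0`. -/
theorem potential_remaining_add_le_of_mem (hb : Monotone b) (hb0 : b 0 = 0) (hba : ∀ k, b k ≤ a)
    (hd : ∀ v, d ≤ (G.neighborSet v).ncard) (hδ : 0 ≤ δ)
    (hq : ∀ x ∉ W, degIn G W x ≤ q) (hslope : ∀ i < q, b i + δ ≤ b (i + 1))
    (hv : v ∈ W) (hvp : degIn G W v = p) (hp : ∀ u ∈ W, degIn G W u ≤ p) :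
    potential G a b (remaining G W v) + (a + δ * (d - p)) + p * (a - b (p - 1) + δ * (d - p))
      ≤ potential G a b W := by
  set W' := remaining G W v
  set A : Finset V := {w ∈ W | G.Adj v w} with hA
  have hT : insert v A ⊆ W \ W' := insert_subset
    (mem_sdiff.2 ⟨hv, self_notMem_remaining G W v⟩) (filter_adj_subset_sdiff_remaining G W v)
  have hW : W' ⊆ W := remaining_subset G W v
  have hsplit := potential_add_sum_le (G := G) hba hW hT
  have hblue := slope_mul_sum_degIn_le hδ
    (fun x hx i hi => hslope i (hi.trans_le (hq x (mem_compl.1 hx)))) hW hT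
  have hdeg : ∀ u ∈ W, δ * ((d : ℤ) - p) ≤ δ * degIn G Wᶜ u := fun u hu =>
    mul_le_mul_of_nonneg_left (sub_le_degIn_compl hd (hp u hu)) hδ
  have hnbr : ∀ u ∈ A, a - b (p - 1) + δ * (d - p) ≤ a - b (degIn G W' u) + δ * degIn G Wᶜ u := by
    intro u hu
    obtain ⟨huW, hvu⟩ := mem_filter.1 hu
    have hlt := degIn_remaining_lt hv hvu.symm
    have hmono : b (degIn G W' u) ≤ b (p - 1) := hb (Nat.le_sub_one_of_lt (hlt.trans_le (hp u huW)))
    linarith [hdeg u huW]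
  have hsum := card_nsmul_le_sum A _ _ hnbr
  have hvA : v ∉ A := by simp [hA]
  rw [sum_insert hvA] at hsplit hblue
  rw [show #A = p from hvp, nsmul_eq_mul, sum_add_distrib] at hsum
  rw [degIn_remaining_self, hb0] at hsplit
  linarith [hdeg v hv]

/-- The bound has `d - 1 - p` because among the blue neighbors of a white neighbor of `v`, the
vertex `v` itself is already accounted for by the term `b q`. -/
theorem potential_remaining_add_le_of_notMem (hb : Monotone b) (hb0 : b 0 = 0)
    (hba : ∀ k, b k ≤ a) (hd : ∀ v, d ≤ (G.neighborSet v).ncard) (hδ : 0 ≤ δ)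
    (hq : ∀ x ∉ W, degIn G W x ≤ q) (hslope : ∀ i < q, b i + δ ≤ b (i + 1))
    (hv : v ∉ W) (hvq : degIn G W v = q) (hp : ∀ u ∈ W, degIn G W u ≤ p) :
    potential G a b (remaining G W v) + b q + q * (a - b p + δ * (d - 1 - p))
      ≤ potential G a b W := by
  set W' := remaining G W v
  set A : Finset V := {w ∈ W | G.Adj v w}
  have hT : A ⊆ W \ W' := filter_adj_subset_sdiff_remaining G W v
  have hW : W' ⊆ W := remaining_subset G W v
  have hsplit := potential_add_sum_le (G := G) hba hW hT
  have hblue := slope_mul_sum_degIn_le hδ (X := Wᶜ.erase v)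
    (fun x hx i hi => hslope i (hi.trans_le (hq x (mem_compl.1 (mem_of_mem_erase hx))))) hW hT
  have hnbr : ∀ u ∈ A,
      a - b p + δ * (d - 1 - p) ≤ a - b (degIn G W' u) + δ * degIn G (Wᶜ.erase v) u := by
    intro u hu
    have huW := (mem_filter.1 hu).1
    have hmono : b (degIn G W' u) ≤ b p := hb ((degIn_mono hW u).trans (hp u huW))
    have hdeg : (d : ℤ) - 1 - p ≤ degIn G (Wᶜ.erase v) u := by
      have := sub_le_degIn_compl hd (hp u huW)
      have := degIn_le_degIn_erase_add_one (G := G) Wᶜ u v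
      omega
    linarith [mul_le_mul_of_nonneg_left hdeg hδ]
  have hsum := card_nsmul_le_sum A _ _ hnbr
  rw [show #A = q from hvq, nsmul_eq_mul, sum_add_distrib] at hsum
  rw [← add_sum_erase _ _ (mem_compl.2 hv), degIn_remaining_self, hb0, hvq] at hsplit
  linarith

end Potential

section MinDegreeFive

/-- The weight of a blue vertex with the given number of white neighbors; white vertices weigh
`23`. -/
def blueWeight : ℕ → ℤ
  | 0 => 0
  | 1 => 4
  | 2 => 8
  | 3 => 10
  | 4 => 12
  | _ => 13

lemma blueWeight_of_five_le {k : ℕ} (hk : 5 ≤ k) : blueWeight k = 13 := by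
  obtain ⟨i, rfl⟩ := Nat.exists_eq_add_of_le' hk
  rfl

lemma blueWeight_monotone : Monotone blueWeight := by
  refine monotone_nat_of_le_succ fun k => ?_
  rcases Nat.lt_or_ge k 5 with hk | hk
  · interval_cases k <;> decide
  · rw [blueWeight_of_five_le hk, blueWeight_of_five_le (by omega)]

lemma blueWeight_le_thirteen (k : ℕ) : blueWeight k ≤ 13 :=
  (blueWeight_monotone (Nat.le_add_right k 5)).trans_eq (blueWeight_of_five_le (by omega))

variable {p q : ℕ}

lemma exists_slope_of_white (hp : 1 ≤ p) (hpq : 5 ≤ p ∨ q ≤ p + 1) :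
    ∃ δ : ℤ, 0 ≤ δ ∧ (∀ i < q, blueWeight i + δ ≤ blueWeight (i + 1)) ∧
      78 ≤ 23 + δ * (5 - p) + p * (23 - blueWeight (p - 1) + δ * (5 - p)) := by
  rcases le_or_gt 5 p with hp5 | hp5
  · refine ⟨0, le_rfl, fun i _ => by simpa using blueWeight_monotone i.le_succ, ?_⟩
    rcases hp5.eq_or_lt with rfl | hp6
    · decide
    · rw [blueWeight_of_five_le (by omega)]
      omega
  · have hq : q ≤ p + 1 := by omega
    suffices ∃ δ : ℤ, 0 ≤ δ ∧ (∀ i < p + 1, blueWeight i + δ ≤ blueWeight (i + 1)) ∧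
        78 ≤ 23 + δ * (5 - p) + p * (23 - blueWeight (p - 1) + δ * (5 - p)) from
      this.imp fun δ h => ⟨h.1, fun i hi => h.2.1 i (hi.trans_le hq), h.2.2⟩
    interval_cases p
    · exact ⟨4, by decide⟩
    · exact ⟨2, by decide⟩
    · exact ⟨2, by decide⟩
    · exact ⟨1, by decide⟩

lemma exists_slope_of_blue (hp4 : p ≤ 4) (hpq : p + 2 ≤ q) :
    ∃ δ : ℤ, 0 ≤ δ ∧ (∀ i < q, blueWeight i + δ ≤ blueWeight (i + 1)) ∧
      78 ≤ blueWeight q + q * (23 - blueWeight p + δ * (5 - 1 - p)) := by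
  rcases le_or_gt 6 q with hq6 | hq6
  · refine ⟨0, le_rfl, fun i _ => by simpa using blueWeight_monotone i.le_succ, ?_⟩
    have hbp : blueWeight p ≤ 12 := blueWeight_monotone hp4
    rw [blueWeight_of_five_le (by omega)]
    nlinarith
  · have hq2 : 2 ≤ q := by omega
    have hpq' : p ≤ q - 2 := Nat.le_sub_of_add_le hpq
    interval_cases q
    · obtain rfl : p = 0 := by omega
      exact ⟨4, by decide⟩
    · exact ⟨2, by interval_cases p <;> decide⟩
    · exact ⟨2, by interval_cases p <;> decide⟩
    · exact ⟨1, by interval_cases p <;> decide⟩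

variable [Fintype V]

theorem exists_potential_remaining_add_le (hmin : ∀ v, 5 ≤ (G.neighborSet v).ncard)
    {W : Finset V} (hne : W.Nonempty) (hW : ∀ w ∈ W, 0 < degIn G W w) :
    ∃ v, potential G 23 blueWeight (remaining G W v) + 78 ≤ potential G 23 blueWeight W := by
  have hle (k : ℕ) : blueWeight k ≤ 23 := (blueWeight_le_thirteen k).trans (by norm_num)
  obtain ⟨v, hv, hp⟩ := exists_max_image W (degIn G W) hne
  obtain ⟨q, hqdef⟩ : ∃ q, Wᶜ.sup (degIn G W) = q := ⟨_, rfl⟩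
  have hq : ∀ x ∉ W, degIn G W x ≤ q := fun x hx => hqdef ▸ le_sup (mem_compl.2 hx)
  by_cases hpq : 5 ≤ degIn G W v ∨ q ≤ degIn G W v + 1
  · obtain ⟨δ, hδ, hslope, harith⟩ := exists_slope_of_white (hW v hv) hpq
    refine ⟨v, ?_⟩
    have hdrop := potential_remaining_add_le_of_mem blueWeight_monotone rfl
      hle hmin hδ hq hslope hv rfl hp
    push_cast at hdrop
    linarith
  · push Not at hpq
    obtain ⟨δ, hδ, hslope, harith⟩ := exists_slope_of_blue (q := q) (by omega) hpq.2
    obtain ⟨y, hy, -⟩ := Finset.lt_sup_iff.1 (hpq.2.trans_eq hqdef.symm)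
    obtain ⟨x, hx, hxq⟩ := exists_mem_eq_sup Wᶜ ⟨y, hy⟩ (degIn G W)
    refine ⟨x, ?_⟩
    have hdrop := potential_remaining_add_le_of_notMem blueWeight_monotone rfl
      hle hmin hδ hq hslope (mem_compl.1 hx) (hxq.symm.trans hqdef) hp
    push_cast at hdrop
    linarith

end MinDegreeFive

end Isolation

/-- If `G` has order `n` and minimum degree at least 5, then `ι(G) ≤ 23n/78`. -/
theorem isolation_number_minDegree_five {V : Type*} [Fintype V] (G : SimpleGraph V) (n : ℕ)
    (hn : Fintype.card V = n) (hmin : ∀ v : V, 5 ≤ (G.neighborSet v).ncard) :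
    (isolationNumber G : ℝ) ≤ 23 * n / 78 := by
  have hbound : 78 * (isolationNumber G : ℤ) ≤ 23 * Fintype.card V :=
    Isolation.mul_isolationNumber_le_of_potential_drop (b := Isolation.blueWeight) le_rfl
      (by norm_num) (fun _ => Isolation.exists_potential_remaining_add_le hmin)
      (fun v => (hmin v).trans_lt' (by norm_num))
  rw [hn] at hbound
  rw [le_div_iff₀' (by norm_num)]
  exact_mod_cast hbound
end
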